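/- arXiv:1209.4972 — 3 statements merged into one kernel-verified Lean document; each statement's English description precedes it below -/
import Mathlib

section
/- Let G be a connected unicyclic graph of the form G = C_4 ∪ (P_1 ∪ ⋯ ∪ P_r), where C_4 is a cycle of length 4, each P_i is a path graph with |V(P_i) ∩ V(C_4)| = 1, and the P_i are pairwise vertex-disjoint. If G does not belong to the family 𝒢_4, then J_G is not unmixed. -/
open MvPolynomial

noncomputable section

/-- The binomial edge ideal of a simple graph `G` on vertex type `V`, inside the
polynomial ring `K[x_i, y_i : i ∈ V]`, modelled as `MvPolynomial (V ⊕ V) K`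
with `x_i = X (Sum.inl i)` and `y_i = X (Sum.inr i)`. -/
def binomialEdgeIdeal (K : Type*) [Field K] {V : Type*} (G : SimpleGraph V) :
    Ideal (MvPolynomial (V ⊕ V) K) :=
  Ideal.span { f | ∃ i j : V, G.Adj i j ∧
    f = X (Sum.inl i) * X (Sum.inr j) - X (Sum.inl j) * X (Sum.inr i) }

/-- The minimal number of generators of an ideal. -/
def mu {R : Type*} [CommRing R] (J : Ideal R) : ℕ :=
  sInf {k | ∃ s : Finset R, s.card = k ∧ Ideal.span (s : Set R) = J}

/-- The height of an ideal: the infimum of the heights of the primes containing it. -/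
def htI {R : Type*} [CommRing R] (I : Ideal R) : ℕ∞ :=
  ⨅ (P : PrimeSpectrum R) (_ : I ≤ P.asIdeal), Order.height P

/-- An ideal is unmixed if all of its minimal primes have height equal to its height. -/
def IsUnmixed {R : Type*} [CommRing R] (I : Ideal R) : Prop :=
  ∀ P ∈ I.minimalPrimes, htI P = htI I

/-- The depth of a ring `R` with respect to an ideal `m`: the supremum of the
lengths of regular sequences on `R` consisting of elements of `m`. -/
def ringDepth (R : Type*) [CommRing R] (m : Ideal R) : ℕ∞ :=
  sSup {d : ℕ∞ | ∃ l : List R, (l.length : ℕ∞) = d ∧ (∀ x ∈ l, x ∈ m) ∧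
    RingTheory.Sequence.IsRegular R l}

/-- The graded maximal ideal of the quotient of a polynomial ring by an ideal `J`:
the image of the ideal generated by all the variables. -/
def gradedMaxQuot {K σ : Type*} [Field K] (J : Ideal (MvPolynomial σ K)) :
    Ideal (MvPolynomial σ K ⧸ J) :=
  (Ideal.span (Set.range (X : σ → MvPolynomial σ K))).map (Ideal.Quotient.mk J)

/-- `S/J` is Cohen–Macaulay: its depth with respect to the graded maximal ideal
equals its Krull dimension. -/
def IsCMQuot {K σ : Type*} [Field K] (J : Ideal (MvPolynomial σ K)) : Prop :=
  (ringDepth (MvPolynomial σ K ⧸ J) (gradedMaxQuot J) : WithBot ℕ∞) =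
    ringKrullDim (MvPolynomial σ K ⧸ J)

/-- A graph is a path graph if its vertices can be ordered `v_1, …, v_m` so that
its edges are exactly `{v_i, v_{i+1}}` for `1 ≤ i ≤ m - 1`. -/
def IsPathGraph {V : Type*} (H : SimpleGraph V) : Prop :=
  ∃ (m : ℕ) (e : V ≃ Fin m), ∀ a b : V,
    H.Adj a b ↔ ((e a : ℕ) + 1 = (e b : ℕ) ∨ (e b : ℕ) + 1 = (e a : ℕ))

/-- The vertex set of a connected component, as a set of vertices. -/
def compSupp {V : Type*} (G : SimpleGraph V) (c : G.ConnectedComponent) : Set V :=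
  {v | G.connectedComponentMk v = c}

end

noncomputable section

/-- The adjacency-generating relation of the graph in the family `𝒢₃` with path
lengths `r`, `s`, `t`: three paths `u_1—…—u_r`, `v_1—…—v_s`, `w_1—…—w_t` together
with the triangle `u_1—v_1—w_1—u_1`. -/
def g3Rel (r s t : ℕ) : (Fin r ⊕ (Fin s ⊕ Fin t)) → (Fin r ⊕ (Fin s ⊕ Fin t)) → Prop
  | Sum.inl i, Sum.inl j => (i : ℕ) + 1 = (j : ℕ)
  | Sum.inr (Sum.inl i), Sum.inr (Sum.inl j) => (i : ℕ) + 1 = (j : ℕ)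
  | Sum.inr (Sum.inr i), Sum.inr (Sum.inr j) => (i : ℕ) + 1 = (j : ℕ)
  | Sum.inl i, Sum.inr (Sum.inl j) => (i : ℕ) = 0 ∧ (j : ℕ) = 0
  | Sum.inl i, Sum.inr (Sum.inr j) => (i : ℕ) = 0 ∧ (j : ℕ) = 0
  | Sum.inr (Sum.inl i), Sum.inr (Sum.inr j) => (i : ℕ) = 0 ∧ (j : ℕ) = 0
  | _, _ => False

/-- The member of the family `𝒢₃` with path lengths `r`, `s`, `t`. -/
def graphG3 (r s t : ℕ) : SimpleGraph (Fin r ⊕ (Fin s ⊕ Fin t)) :=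
  SimpleGraph.fromRel (g3Rel r s t)

/-- The adjacency-generating relation of the graph in the family `𝒢₄` with path
lengths `r`, `s`: two paths `u_1—…—u_r` and `v_1—…—v_s` together with the
edges `u_1—v_1` and `u_2—v_2`. -/
def g4Rel (r s : ℕ) : (Fin r ⊕ Fin s) → (Fin r ⊕ Fin s) → Prop
  | Sum.inl i, Sum.inl j => (i : ℕ) + 1 = (j : ℕ)
  | Sum.inr i, Sum.inr j => (i : ℕ) + 1 = (j : ℕ)
  | Sum.inl i, Sum.inr j => ((i : ℕ) = 0 ∧ (j : ℕ) = 0) ∨ ((i : ℕ) = 1 ∧ (j : ℕ) = 1)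
  | _, _ => False

/-- The member of the family `𝒢₄` with path lengths `r`, `s`. -/
def graphG4 (r s : ℕ) : SimpleGraph (Fin r ⊕ Fin s) :=
  SimpleGraph.fromRel (g4Rel r s)

/-- A graph is a cycle graph of length `l` if its vertices can be arranged in a
cyclic order `v_1, …, v_l` so that its edges are exactly the consecutive ones
(indices mod `l`). -/
def IsCycleGraphOfLength {V : Type*} (H : SimpleGraph V) (l : ℕ) : Prop :=
  ∃ e : V ≃ Fin l, ∀ a b : V,
    H.Adj a b ↔ (((e a : ℕ) + 1) % l = (e b : ℕ) ∨ ((e b : ℕ) + 1) % l = (e a : ℕ))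

section BinomialEdge

variable {K : Type*} [Field K] {V : Type*}

/-- The `2`-minor `x_i y_j - x_j y_i` of the generic `2 × V` matrix. -/
def edgeBinomial (K : Type*) [Field K] {V : Type*} (i j : V) : MvPolynomial (V ⊕ V) K :=
  X (Sum.inl i) * X (Sum.inr j) - X (Sum.inl j) * X (Sum.inr i)

/-- The algebra map sending `x_i` to `α i` and `y_i` to `α i * β i`. -/
def slopeHom (α β : V → MvPolynomial (V ⊕ V) K) :
    MvPolynomial (V ⊕ V) K →ₐ[K] MvPolynomial (V ⊕ V) K :=
  aeval (Sum.elim α fun i => α i * β i)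

@[simp] lemma slopeHom_inl (α β : V → MvPolynomial (V ⊕ V) K) (i : V) :
    slopeHom α β (X (Sum.inl i)) = α i := by simp [slopeHom]

@[simp] lemma slopeHom_inr (α β : V → MvPolynomial (V ⊕ V) K) (i : V) :
    slopeHom α β (X (Sum.inr i)) = α i * β i := by simp [slopeHom]

lemma comp_slopeHom (ψ : MvPolynomial (V ⊕ V) K →ₐ[K] MvPolynomial (V ⊕ V) K)
    (α β : V → MvPolynomial (V ⊕ V) K) :
    ψ.comp (slopeHom α β) = slopeHom (fun i => ψ (α i)) (fun i => ψ (β i)) := by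
  apply MvPolynomial.algHom_ext
  rintro (i | i) <;> simp

/-- The image of `x_i` under the parametrization attached to a partial colouring. -/
def colorScale (K : Type*) [Field K] (c : V → Option V) (i : V) : MvPolynomial (V ⊕ V) K :=
  (c i).elim 0 fun _ => X (Sum.inl i)

/-- The slope `y_i / x_i` in the parametrization attached to a partial colouring. -/
def colorSlope (K : Type*) [Field K] (c : V → Option V) (i : V) : MvPolynomial (V ⊕ V) K :=
  (c i).elim 0 fun j => X (Sum.inr j)

/-- The prime ideal attached to a partial colouring `c` of the vertices: it contains the
variables at the uncoloured vertices and the `2`-minors of each colour class. -/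
def colorIdeal (K : Type*) [Field K] (c : V → Option V) : Ideal (MvPolynomial (V ⊕ V) K) :=
  RingHom.ker (slopeHom (colorScale K c) (colorSlope K c))

instance (c : V → Option V) : (colorIdeal K c).IsPrime := RingHom.ker_isPrime _

lemma mem_colorIdeal {c : V → Option V} {f : MvPolynomial (V ⊕ V) K} :
    f ∈ colorIdeal K c ↔ slopeHom (colorScale K c) (colorSlope K c) f = 0 := Iff.rfl

lemma X_inl_mem_colorIdeal_iff {c : V → Option V} {i : V} :
    (X (Sum.inl i) : MvPolynomial (V ⊕ V) K) ∈ colorIdeal K c ↔ c i = none := by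
  rw [mem_colorIdeal]
  cases h : c i <;> simp [colorScale, h]

lemma X_inr_mem_colorIdeal {c : V → Option V} {i : V} (h : c i = none) :
    (X (Sum.inr i) : MvPolynomial (V ⊕ V) K) ∈ colorIdeal K c := by
  rw [mem_colorIdeal]
  simp [colorScale, h]

lemma edgeBinomial_mem_colorIdeal_iff {c : V → Option V} {i j : V} :
    edgeBinomial K i j ∈ colorIdeal K c ↔ c i = none ∨ c j = none ∨ c i = c j := by
  rw [mem_colorIdeal]
  cases hi : c i with
  | none => simp [edgeBinomial, colorScale, hi]
  | some a =>
    cases hj : c j with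
    | none => simp [edgeBinomial, colorScale, hj]
    | some b =>
      have : slopeHom (colorScale K c) (colorSlope K c) (edgeBinomial K i j) =
          X (Sum.inl i) * X (Sum.inl j) * (X (Sum.inr b) - X (Sum.inr a)) := by
        simp only [edgeBinomial, colorScale, colorSlope, map_sub, map_mul, slopeHom_inl,
          slopeHom_inr, hi, hj, Option.elim_some]
        ring
      rw [this]
      simp [sub_eq_zero, X_inj, @eq_comm _ b a]

lemma colorIdeal_le_of_generators_mem {c : V → Option V} {Q : Ideal (MvPolynomial (V ⊕ V) K)}
    [Q.IsPrime] (hx : ∀ i, c i = none → X (Sum.inl i) ∈ Q)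
    (hy : ∀ i, c i = none → X (Sum.inr i) ∈ Q)
    (hxy : ∀ i j, c i = some j → edgeBinomial K i j ∈ Q)
    (hroot : ∀ i j, c i = some j → X (Sum.inl j) ∉ Q) : colorIdeal K c ≤ Q := by
  let F := FractionRing (MvPolynomial (V ⊕ V) K ⧸ Q)
  let π : MvPolynomial (V ⊕ V) K →ₐ[K] F := Algebra.algHom K _ F
  have hπ : ∀ f, π f = 0 ↔ f ∈ Q := by
    intro f
    have : π f = algebraMap (MvPolynomial (V ⊕ V) K ⧸ Q) F (Ideal.Quotient.mk Q f) := rfl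
    rw [this, FaithfulSMul.algebraMap_eq_zero_iff, Ideal.Quotient.eq_zero_iff_mem]
  let ψ : MvPolynomial (V ⊕ V) K →ₐ[K] F := aeval
    (Sum.elim (fun i => π (X (Sum.inl i))) fun j => π (X (Sum.inr j)) / π (X (Sum.inl j)))
  have hcomp : ψ.comp (slopeHom (colorScale K c) (colorSlope K c)) = π := by
    apply MvPolynomial.algHom_ext
    rintro (i | i)
    · cases h : c i with
      | none => simp [colorScale, h, (hπ _).2 (hx i h)]
      | some j => simp [colorScale, h, ψ]
    · cases h : c i with
      | none => simp [colorScale, h, (hπ _).2 (hy i h)]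
      | some j =>
        have h0 : π (X (Sum.inl j)) ≠ 0 := fun h1 => hroot i j h ((hπ _).1 h1)
        have h2 := (hπ _).2 (hxy i j h)
        simp only [edgeBinomial, map_sub, map_mul] at h2
        simp only [AlgHom.comp_apply, slopeHom_inr, colorScale, colorSlope, h,
          Option.elim_some, map_mul, ψ, aeval_X, Sum.elim_inl, Sum.elim_inr]
        rw [← mul_div_assoc, div_eq_iff h0]
        linear_combination h2
  intro f hf
  rw [← hπ, ← hcomp, AlgHom.comp_apply, mem_colorIdeal.1 hf, map_zero]

lemma height_ker_add_one_le {R A : Type*} [CommRing R] [CommRing A] [IsDomain A]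
    {φ φ' : R →+* A} (ψ : A →+* A) (hψ : ψ.comp φ = φ') (f : R) (h0 : φ f ≠ 0) (h1 : φ' f = 0) :
    (RingHom.ker φ).height + 1 ≤ (RingHom.ker φ').height := by
  have := RingHom.ker_isPrime φ
  have := RingHom.ker_isPrime φ'
  apply Ideal.height_add_one_le_of_lt_of_isPrime
  refine lt_of_le_of_ne (fun g hg => ?_) fun h => h0 ?_
  · rw [RingHom.mem_ker] at hg ⊢
    rw [← hψ, RingHom.comp_apply, hg, map_zero]
  · rw [← RingHom.mem_ker, h]
    exact h1

/-- A partial colouring by chosen representatives: every colour is a vertex of that colour. -/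
def IsRooted (c : V → Option V) : Prop := ∀ i j, c i = some j → c j = some j

open Classical in
lemma card_le_height_ker_slopeHom {c : V → Option V} (hc : IsRooted c) (A : Finset V)
    (hA : ∀ i ∈ A, c i ≠ some i) :
    (A.card : ℕ∞) ≤ (RingHom.ker (slopeHom (fun i => X (Sum.inl i))
      fun i => if i ∈ A then colorSlope K c i else X (Sum.inr i)).toRingHom).height := by
  induction A using Finset.induction_on with
  | empty => simp
  | insert a A ha ih =>
    rw [Finset.card_insert_of_notMem ha, Nat.cast_succ]
    refine (add_le_add_left (ih fun i hi => hA i (Finset.mem_insert_of_mem hi)) 1).trans ?_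
    have haa := hA a (Finset.mem_insert_self a A)
    let ψ : MvPolynomial (V ⊕ V) K →ₐ[K] MvPolynomial (V ⊕ V) K :=
      aeval (Sum.elim (fun i => X (Sum.inl i))
        fun i => if i = a then colorSlope K c a else X (Sum.inr i))
    have hψ : ψ.comp (slopeHom (fun i => X (Sum.inl i))
        fun i => if i ∈ A then colorSlope K c i else X (Sum.inr i)) =
        slopeHom (fun i => X (Sum.inl i))
        fun i => if i ∈ insert a A then colorSlope K c i else X (Sum.inr i) := by
      rw [comp_slopeHom]
      congr 1
      · ext1 i
        simp [ψ]
      · ext1 i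
        by_cases hi : i ∈ A
        · simp only [hi, if_true, Finset.mem_insert, or_true]
          cases h : c i with
          | none => simp [colorSlope, h]
          | some j =>
            have : j ≠ a := by
              rintro rfl
              exact haa (hc _ _ h)
            simp [colorSlope, h, ψ, this]
        · by_cases hia : i = a
          · subst hia
            simp [hi, ψ]
          · simp [hi, hia, ψ]
    refine height_ker_add_one_le ψ.toRingHom (congrArg AlgHom.toRingHom hψ)
      ((c a).elim (X (Sum.inr a)) fun j => edgeBinomial K a j) ?_ ?_
    · change slopeHom _ _ _ ≠ 0
      cases h : c a with
      | none => simp [ha]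
      | some j =>
        have hja : j ≠ a := by
          rintro rfl
          exact haa h
        have hjA : j ∉ A := fun hj =>
          hA j (Finset.mem_insert_of_mem hj) (hc _ _ h)
        have : slopeHom (K := K) (fun i => X (Sum.inl i))
            (fun i => if i ∈ A then colorSlope K c i else X (Sum.inr i)) (edgeBinomial K a j) =
            X (Sum.inl a) * X (Sum.inl j) * (X (Sum.inr j) - X (Sum.inr a)) := by
          simp only [edgeBinomial, map_sub, map_mul, slopeHom_inl, slopeHom_inr, ha, hjA, if_false]
          ring
        simp only [Option.elim_some]
        rw [this]
        simp [sub_eq_zero, X_inj, hja]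
    · change slopeHom _ _ _ = 0
      cases h : c a with
      | none => simp [colorSlope, h]
      | some j =>
        have hj := hc _ _ h
        have hjA : j ∉ insert a A := fun h1 => hA j h1 hj
        simp only [edgeBinomial, Option.elim_some, map_sub, map_mul, slopeHom_inl, slopeHom_inr,
          hjA, if_false, Finset.mem_insert_self, if_true]
        simp only [colorSlope, h, Option.elim_some]
        ring

open Classical in
lemma card_add_card_le_height_ker_slopeHom {c : V → Option V} (hc : IsRooted c) (A B : Finset V)
    (hA : ∀ i ∈ A, c i ≠ some i) (hB : ∀ i ∈ B, c i = none) :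
    (A.card + B.card : ℕ∞) ≤ (RingHom.ker (slopeHom
      (fun i => if i ∈ B then 0 else X (Sum.inl i))
      fun i => if i ∈ A then colorSlope K c i else X (Sum.inr i)).toRingHom).height := by
  induction B using Finset.induction_on with
  | empty => simpa using card_le_height_ker_slopeHom hc A hA
  | insert a B ha ih =>
    rw [Finset.card_insert_of_notMem ha, Nat.cast_succ, ← add_assoc]
    refine (add_le_add_left (ih fun i hi => hB i (Finset.mem_insert_of_mem hi)) 1).trans ?_
    let ψ : MvPolynomial (V ⊕ V) K →ₐ[K] MvPolynomial (V ⊕ V) K :=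
      aeval (Sum.elim (fun i => if i = a then 0 else X (Sum.inl i)) fun i => X (Sum.inr i))
    refine height_ker_add_one_le ψ.toRingHom (congrArg AlgHom.toRingHom
      (?_ : ψ.comp (slopeHom _ _) = slopeHom _ _)) (X (Sum.inl a)) ?_ ?_
    · rw [comp_slopeHom]
      congr 1
      · ext1 i
        by_cases hia : i = a
        · subst hia
          simp [ha, ψ]
        · by_cases hi : i ∈ B <;> simp [hi, hia, ψ]
      · ext1 i
        by_cases hi : i ∈ A
        · cases h : c i <;> simp [hi, colorSlope, h, ψ]
        · simp [hi, ψ]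
    · change slopeHom _ _ _ ≠ 0
      simp [ha]
    · change slopeHom _ _ _ = 0
      simp

lemma binomialEdgeIdeal_le_colorIdeal {G : SimpleGraph V} {c : V → Option V}
    (h : ∀ i j, G.Adj i j → c i = none ∨ c j = none ∨ c i = c j) :
    binomialEdgeIdeal K G ≤ colorIdeal K c := by
  rw [binomialEdgeIdeal, Ideal.span_le]
  rintro f ⟨i, j, hij, rfl⟩
  exact edgeBinomial_mem_colorIdeal_iff.2 (h i j hij)

/-- The ideal of a colouring is a minimal prime of the binomial edge ideal if the colour classes are
connected and every uncoloured vertex is adjacent to two distinct colours. -/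
lemma colorIdeal_mem_minimalPrimes {G : SimpleGraph V} {c : V → Option V} (hc : IsRooted c)
    (hadj : ∀ i j, G.Adj i j → c i = none ∨ c j = none ∨ c i = c j)
    (hconn : ∀ i j, c i = some j →
      Relation.ReflTransGen (fun a b => G.Adj a b ∧ c a ≠ none) i j)
    (hcut : ∀ i, c i = none →
      ∃ a b, G.Adj a i ∧ G.Adj b i ∧ c a ≠ none ∧ c b ≠ none ∧ c a ≠ c b) :
    colorIdeal K c ∈ (binomialEdgeIdeal K G).minimalPrimes := by
  refine ⟨⟨inferInstance, binomialEdgeIdeal_le_colorIdeal hadj⟩, ?_⟩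
  rintro Q ⟨hQ, hGQ⟩ hle
  have hedge : ∀ i j, G.Adj i j → edgeBinomial K i j ∈ Q := fun i j h =>
    hGQ (Ideal.subset_span ⟨i, j, h, rfl⟩)
  have hX : ∀ i, c i ≠ none → X (Sum.inl i) ∉ Q := fun i h hi =>
    h (X_inl_mem_colorIdeal_iff.1 (hle hi))
  have hzero : ∀ i, c i = none → X (Sum.inl i) ∈ Q ∧ X (Sum.inr i) ∈ Q := by
    intro i hi
    obtain ⟨a, b, ha, hb, hca, hcb, hab⟩ := hcut i hi
    have hne : edgeBinomial K a b ∉ Q := fun h => by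
      have := edgeBinomial_mem_colorIdeal_iff.1 (hle h)
      tauto
    constructor
    · refine (hQ.mem_or_mem (?_ : _ * edgeBinomial K a b ∈ Q)).resolve_right hne
      convert Q.sub_mem (Q.mul_mem_left (X (Sum.inl b)) (hedge a i ha))
        (Q.mul_mem_left (X (Sum.inl a)) (hedge b i hb)) using 1
      simp only [edgeBinomial]
      ring
    · refine (hQ.mem_or_mem (?_ : _ * edgeBinomial K a b ∈ Q)).resolve_right hne
      convert Q.sub_mem (Q.mul_mem_left (X (Sum.inr b)) (hedge a i ha))
        (Q.mul_mem_left (X (Sum.inr a)) (hedge b i hb)) using 1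
      simp only [edgeBinomial]
      ring
  refine colorIdeal_le_of_generators_mem (fun i hi => (hzero i hi).1) (fun i hi => (hzero i hi).2)
    (fun i j hij => ?_) fun i j hij => hX j (by simp [hc i j hij])
  have hgen := hconn i j hij
  clear hij
  induction hgen with
  | refl => simp [edgeBinomial]
  | @tail b d _ hbd ih =>
    refine (hQ.mem_or_mem (?_ : X (Sum.inl b) * _ ∈ Q)).resolve_left (hX b hbd.2)
    convert Q.add_mem (Q.mul_mem_left (X (Sum.inl i)) (hedge b d hbd.1))
      (Q.mul_mem_left (X (Sum.inl d)) ih) using 1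
    simp only [edgeBinomial]
    ring

lemma colorIdeal_const_mem_minimalPrimes {G : SimpleGraph V} (hG : G.Connected) (v : V) :
    colorIdeal K (fun _ => some v) ∈ (binomialEdgeIdeal K G).minimalPrimes := by
  refine colorIdeal_mem_minimalPrimes (by simp [IsRooted]) (by simp) (fun i j _ => ?_) (by simp)
  have := (SimpleGraph.reachable_iff_reflTransGen i j).1 (hG i j)
  exact Relation.ReflTransGen.mono (fun a b h => ⟨h, by simp⟩) _ _ this

variable [Fintype V]

open Classical in
/-- The codimension of the parametrization attached to a partial colouring: each vertex which is
not the representative of its colour imposes one condition, an uncoloured one imposes another. -/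
def colorCodim (c : V → Option V) : ℕ :=
  (Finset.univ.filter fun i => c i ≠ some i).card + (Finset.univ.filter fun i => c i = none).card

lemma colorCodim_le_height {c : V → Option V} (hc : IsRooted c) :
    (colorCodim c : ℕ∞) ≤ (colorIdeal K c).height := by
  classical
  have h := card_add_card_le_height_ker_slopeHom (K := K) hc
    (Finset.univ.filter fun i => c i ≠ some i) (Finset.univ.filter fun i => c i = none)
    (by simp) (by simp)
  have hs : (fun i => if i ∈ Finset.univ.filter (fun i => c i = none) then 0
      else (X (Sum.inl i) : MvPolynomial (V ⊕ V) K)) = colorScale K c := by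
    ext1 i
    cases hi : c i <;> simp [colorScale, hi]
  have ht : (fun i => if i ∈ Finset.univ.filter (fun i => c i ≠ some i) then colorSlope K c i
      else (X (Sum.inr i) : MvPolynomial (V ⊕ V) K)) = colorSlope K c := by
    ext1 i
    by_cases hi : c i = some i <;> simp [colorSlope, hi]
  rw [hs, ht] at h
  rw [colorCodim, Nat.cast_add]
  exact h

lemma height_le_colorCodim {c : V → Option V} (hc : IsRooted c) :
    (colorIdeal K c).height ≤ colorCodim c := by
  classical
  let s : Finset (MvPolynomial (V ⊕ V) K) :=
    (Finset.univ.filter fun i => c i ≠ some i).image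
      (fun i => (c i).elim (X (Sum.inr i)) fun j => edgeBinomial K i j) ∪
    (Finset.univ.filter fun i => c i = none).image fun i => X (Sum.inl i)
  have hs : s.card ≤ colorCodim c := by
    refine (Finset.card_union_le _ _).trans (add_le_add ?_ ?_)
    · convert Finset.card_image_le
    · convert Finset.card_image_le
  refine (Ideal.height_le_card_of_mem_minimalPrimes_span_finset (s := s) ?_).trans
    (by exact_mod_cast hs)
  refine ⟨⟨inferInstance, ?_⟩, ?_⟩
  · rw [Ideal.span_le]
    intro f hf
    simp only [s, Finset.coe_union, Finset.coe_image, Set.mem_union, Set.mem_image,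
      Finset.coe_filter, Finset.mem_univ, true_and, Set.mem_ofPred_eq] at hf
    rcases hf with ⟨i, -, rfl⟩ | ⟨i, hi, rfl⟩
    · cases h : c i with
      | none => exact X_inr_mem_colorIdeal h
      | some j => exact edgeBinomial_mem_colorIdeal_iff.2 (Or.inr (Or.inr (by rw [h, hc _ _ h])))
    · exact X_inl_mem_colorIdeal_iff.2 hi
  · rintro Q ⟨hQ, hsQ⟩ hle
    have hmem : ∀ f ∈ s, f ∈ Q := fun f hf => hsQ (Ideal.subset_span hf)
    refine colorIdeal_le_of_generators_mem (fun i hi => hmem _ ?_) (fun i hi => hmem _ ?_)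
      (fun i j hij => ?_) fun i j hij hj => ?_
    · exact Finset.mem_union_right _ (Finset.mem_image_of_mem _ (by simpa using hi))
    · exact Finset.mem_union_left _ (Finset.mem_image.2 ⟨i, by simp [hi], by simp [hi]⟩)
    · by_cases h : j = i
      · subst h
        simp [edgeBinomial]
      · refine hmem _ (Finset.mem_union_left _ (Finset.mem_image.2 ⟨i, ?_, by simp [hij]⟩))
        simp [hij, h]
    · have h1 := X_inl_mem_colorIdeal_iff.1 (hle hj)
      rw [hc _ _ hij] at h1
      cases h1


lemma colorCodim_add_card_le (c : V → Option V) (R T : Finset V)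
    (hR : ∀ i ∈ R, c i = some i) (hT : ∀ i, c i = none → i ∈ T) :
    colorCodim c + R.card ≤ Fintype.card V + T.card := by
  classical
  have h1 := Finset.card_filter_add_card_filter_not (s := Finset.univ) fun i => c i = some i
  have h2 : R.card ≤ (Finset.univ.filter fun i => c i = some i).card :=
    Finset.card_le_card fun i hi => by simpa using hR i hi
  have h3 : (Finset.univ.filter fun i => c i = none).card ≤ T.card :=
    Finset.card_le_card fun i hi => hT i (by simpa using hi)
  rw [Finset.card_univ] at h1
  have h4 : colorCodim c = (Finset.univ.filter fun i => ¬ c i = some i).card +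
    (Finset.univ.filter fun i => c i = none).card := by
    unfold colorCodim
    congr!
  lia

lemma card_add_card_le_colorCodim (c : V → Option V) (R T : Finset V)
    (hR : ∀ i, c i = some i → i ∈ R) (hT : ∀ i ∈ T, c i = none) :
    Fintype.card V + T.card ≤ colorCodim c + R.card := by
  classical
  have h1 := Finset.card_filter_add_card_filter_not (s := Finset.univ) fun i => c i = some i
  have h2 : (Finset.univ.filter fun i => c i = some i).card ≤ R.card :=
    Finset.card_le_card fun i hi => hR i (by simpa using hi)
  have h3 : T.card ≤ (Finset.univ.filter fun i => c i = none).card :=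
    Finset.card_le_card fun i hi => by simpa using hT i hi
  rw [Finset.card_univ] at h1
  have h4 : colorCodim c = (Finset.univ.filter fun i => ¬ c i = some i).card +
    (Finset.univ.filter fun i => c i = none).card := by
    unfold colorCodim
    congr!
  lia

lemma htI_eq_height {R : Type*} [CommRing R] (P : Ideal R) [hP : P.IsPrime] :
    htI P = P.height := by
  have h := PrimeSpectrum.height_eq_orderHeight (⟨P, hP⟩ : PrimeSpectrum R)
  rw [h]
  exact le_antisymm (iInf₂_le (⟨P, hP⟩ : PrimeSpectrum R) le_rfl)
    (le_iInf₂ fun Q hQ => Order.height_mono hQ)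

lemma htI_mono {R : Type*} [CommRing R] {I J : Ideal R} (h : I ≤ J) : htI I ≤ htI J :=
  le_iInf₂ fun Q hQ => iInf₂_le Q (h.trans hQ)

lemma not_isUnmixed_of_colorCodim_lt {I : Ideal (MvPolynomial (V ⊕ V) K)} {c c' : V → Option V}
    (hc : IsRooted c) (hc' : IsRooted c') (hle : I ≤ colorIdeal K c)
    (hmin : colorIdeal K c' ∈ I.minimalPrimes) (hlt : colorCodim c < colorCodim c') :
    ¬ IsUnmixed I := by
  intro h
  have h1 : (colorCodim c' : ℕ∞) ≤ colorCodim c :=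
    calc (colorCodim c' : ℕ∞) ≤ (colorIdeal K c').height := colorCodim_le_height hc'
      _ = htI I := by rw [← htI_eq_height, h _ hmin]
      _ ≤ htI (colorIdeal K c) := htI_mono hle
      _ = (colorIdeal K c).height := htI_eq_height _
      _ ≤ colorCodim c := height_le_colorCodim hc
  exact absurd (Nat.cast_le.1 h1) (not_le.2 hlt)

lemma colorCodim_const_add_one (v : V) :
    colorCodim (fun _ : V => some v) + 1 = Fintype.card V := by
  have h1 := colorCodim_add_card_le (fun _ : V => some v) {v} ∅ (by simp) (by simp)
  have h2 := card_add_card_le_colorCodim (fun _ : V => some v) {v} ∅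
    (fun i hi => by simpa [eq_comm] using hi) (by simp)
  simp only [Finset.card_singleton, Finset.card_empty] at h1 h2
  lia

end BinomialEdge

section CycleWithPaths

/-- `g 0, …, g (m - 1)` enumerates the vertices of the path `H` in order. -/
structure IsPathEnum {V : Type*} {G : SimpleGraph V} (H : G.Subgraph) (m : ℕ) (g : ℕ → V) :
    Prop where
  inj : ∀ a b, a < m → b < m → g a = g b → a = b
  mem_iff : ∀ v, v ∈ H.verts ↔ ∃ a < m, g a = v
  adj_iff : ∀ a b, a < m → b < m → (H.Adj (g a) (g b) ↔ a + 1 = b ∨ b + 1 = a)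

lemma IsPathEnum.reverse {V : Type*} {G : SimpleGraph V} {H : G.Subgraph} {m : ℕ} {g : ℕ → V}
    (h : IsPathEnum H m g) : IsPathEnum H m fun a => g (m - 1 - a) where
  inj a b ha hb hab := by
    have := h.inj _ _ (by lia) (by lia) hab
    lia
  mem_iff v := by
    rw [h.mem_iff]
    constructor
    · rintro ⟨a, ha, rfl⟩
      exact ⟨m - 1 - a, by lia, by congr 1; lia⟩
    · rintro ⟨a, ha, rfl⟩
      exact ⟨m - 1 - a, by lia, rfl⟩
  adj_iff a b ha hb := by
    rw [h.adj_iff _ _ (by lia) (by lia)]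
    lia

lemma IsPathGraph.exists_isPathEnum {V : Type*} {G : SimpleGraph V} {H : G.Subgraph}
    (h : IsPathGraph H.coe) {v : V} (hv : v ∈ H.verts) :
    ∃ m g p, IsPathEnum H m g ∧ p < m ∧ g p = v := by
  obtain ⟨m, e, he⟩ := h
  refine ⟨m, fun a => if ha : a < m then (e.symm ⟨a, ha⟩ : V) else v, e ⟨v, hv⟩,
    ⟨fun a b ha hb hab => ?_, fun u => ⟨fun hu => ?_, ?_⟩, fun a b ha hb => ?_⟩,
    (e ⟨v, hv⟩).2, by simp⟩
  · simp only [ha, hb, dif_pos] at hab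
    simpa using e.symm.injective (Subtype.ext hab)
  · exact ⟨e ⟨u, hu⟩, (e ⟨u, hu⟩).2, by simp⟩
  · rintro ⟨a, ha, rfl⟩
    simp [ha]
  · have := he (e.symm ⟨a, ha⟩) (e.symm ⟨b, hb⟩)
    simpa [ha, hb] using this

/-- `G` is the union of the `4`-cycle `w 0, w 1, w 2, w 3` and of the pairwise disjoint paths `P k`,
where `P k` meets the cycle exactly in `w (t k)`. -/
structure IsFourCycleWithPaths {V ι : Type*} (G : SimpleGraph V) (w : Fin 4 → V)
    (P : ι → G.Subgraph) (t : ι → Fin 4) : Prop where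
  inj : Function.Injective w
  adj_iff : ∀ a b, G.Adj a b ↔
    (∃ i, (a = w i ∧ b = w (i + 1)) ∨ (b = w i ∧ a = w (i + 1))) ∨ ∃ k, (P k).Adj a b
  cover : ∀ v, (∃ i, w i = v) ∨ ∃ k, v ∈ (P k).verts
  mem_iff : ∀ k i, w i ∈ (P k).verts ↔ i = t k
  disj : ∀ k l v, v ∈ (P k).verts → v ∈ (P l).verts → k = l
  path : ∀ k, IsPathGraph (P k).coe

namespace IsFourCycleWithPaths

variable {V ι : Type*} {G : SimpleGraph V} {w : Fin 4 → V} {P : ι → G.Subgraph} {t : ι → Fin 4}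

lemma attach_injective (S : IsFourCycleWithPaths G w P t) {k l : ι} (h : t k = t l) : k = l :=
  S.disj k l (w (t k)) ((S.mem_iff k _).2 rfl) ((S.mem_iff l _).2 h)

lemma adj_iff_of_mem (S : IsFourCycleWithPaths G w P t) {k : ι} {u v : V}
    (hu : u ∈ (P k).verts) (hv : v ∈ (P k).verts) : G.Adj u v ↔ (P k).Adj u v := by
  refine ⟨fun h => ?_, fun h => h.adj_sub⟩
  rcases (S.adj_iff u v).1 h with ⟨i, ⟨rfl, rfl⟩ | ⟨rfl, rfl⟩⟩ | ⟨l, hl⟩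
  · rw [S.mem_iff] at hu hv
    rw [← hu] at hv
    simp at hv
  · rw [S.mem_iff] at hu hv
    rw [← hv] at hu
    simp at hu
  · rwa [S.disj k l u hu ((P l).edge_vert hl)]

lemma adj_cycle_iff (S : IsFourCycleWithPaths G w P t) {i j : Fin 4} :
    G.Adj (w i) (w j) ↔ j = i + 1 ∨ i = j + 1 := by
  constructor
  · intro h
    rcases (S.adj_iff _ _).1 h with ⟨l, ⟨h1, h2⟩ | ⟨h1, h2⟩⟩ | ⟨l, hl⟩
    · rw [S.inj h1, S.inj h2]
      simp
    · rw [S.inj h1, S.inj h2]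
      simp
    · have h1 := (S.mem_iff _ _).1 ((P l).edge_vert hl)
      have h2 := (S.mem_iff _ _).1 ((P l).edge_vert hl.symm)
      rw [h1, ← h2] at h
      exact absurd h (G.loopless.irrefl _)
  · rintro (rfl | rfl)
    · exact (S.adj_iff _ _).2 (Or.inl ⟨i, Or.inl ⟨rfl, rfl⟩⟩)
    · exact (S.adj_iff _ _).2 (Or.inl ⟨j, Or.inr ⟨rfl, rfl⟩⟩)

lemma mem_of_adj (S : IsFourCycleWithPaths G w P t) {k : ι} {u v : V}
    (hv : v ∈ (P k).verts) (hvw : v ≠ w (t k)) (h : G.Adj u v) : u ∈ (P k).verts := by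
  rcases (S.adj_iff u v).1 h with ⟨i, ⟨rfl, rfl⟩ | ⟨rfl, rfl⟩⟩ | ⟨l, hl⟩
  · rw [S.mem_iff] at hv
    exact absurd (congrArg w hv) hvw
  · rw [S.mem_iff] at hv
    exact absurd (congrArg w hv) hvw
  · rw [S.disj k l v hv ((P l).edge_vert hl.symm)]
    exact (P l).edge_vert hl

/-- If a path meets the cycle in an inner vertex, removing that vertex leaves three components. -/
lemma not_isUnmixed_of_inner {K : Type*} [Field K] [Fintype V]
    (S : IsFourCycleWithPaths G w P t) (hG : G.Connected) {k : ι} {m p : ℕ} {g : ℕ → V}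
    (hg : IsPathEnum (P k) m g) (hp0 : 0 < p) (hpm : p + 1 < m) (hgp : g p = w (t k)) :
    ¬ IsUnmixed (binomialEdgeIdeal K G) := by
  classical
  let c : V → Option V := fun v =>
    if v = w (t k) then none
    else if ∃ a < p, g a = v then some (g (p - 1))
    else if ∃ a < m, p < a ∧ g a = v then some (g (p + 1))
    else some (w (t k + 1))
  have hgm : ∀ a < m, g a ∈ (P k).verts := fun a ha => (hg.mem_iff _).2 ⟨a, ha, rfl⟩
  have hnone : c (w (t k)) = none := by simp [c]
  have hlow : ∀ a < p, c (g a) = some (g (p - 1)) := by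
    intro a ha
    have h1 : g a ≠ w (t k) := fun h => by
      have := hg.inj a p (by lia) (by lia) (h.trans hgp.symm)
      lia
    have h2 : ∃ b < p, g b = g a := ⟨a, ha, rfl⟩
    simp [c, h1, h2]
  have hhigh : ∀ a < m, p < a → c (g a) = some (g (p + 1)) := by
    intro a ha hpa
    have h1 : g a ≠ w (t k) := fun h => by
      have := hg.inj a p (by lia) (by lia) (h.trans hgp.symm)
      lia
    have h2 : ¬ ∃ b < p, g b = g a := fun ⟨b, hb, h⟩ => by
      have := hg.inj b a (by lia) (by lia) h
      lia
    have h3 : ∃ b < m, p < b ∧ g b = g a := ⟨a, ha, hpa, rfl⟩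
    simp only [c, h1, h2, h3, if_true, if_false]
  have hout : ∀ v ∉ (P k).verts, c v = some (w (t k + 1)) := by
    intro v hv
    have h1 : v ≠ w (t k) := by
      rintro rfl
      exact hv ((S.mem_iff _ _).2 rfl)
    have h2 : ¬ ∃ b < p, g b = v := by
      rintro ⟨b, hb, rfl⟩
      exact hv (hgm b (by lia))
    have h3 : ¬ ∃ b < m, p < b ∧ g b = v := by
      rintro ⟨b, hb, -, rfl⟩
      exact hv (hgm b hb)
    simp only [c, h1, h2, h3, if_false]
  have hnext : w (t k + 1) ∉ (P k).verts := by
    rw [S.mem_iff]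
    simp
  have hroots : c (g (p - 1)) = some (g (p - 1)) ∧ c (g (p + 1)) = some (g (p + 1)) ∧
      c (w (t k + 1)) = some (w (t k + 1)) :=
    ⟨hlow _ (by lia), hhigh _ hpm (by lia), hout _ hnext⟩
  have hrooted : IsRooted c := by
    intro i j hij
    have : j = g (p - 1) ∨ j = g (p + 1) ∨ j = w (t k + 1) := by
      simp only [c] at hij
      split_ifs at hij <;> cases hij <;> simp
    rcases this with rfl | rfl | rfl
    exacts [hroots.1, hroots.2.1, hroots.2.2]
  refine not_isUnmixed_of_colorCodim_lt hrooted (by simp [IsRooted])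
    (binomialEdgeIdeal_le_colorIdeal fun i j hij => ?_)
    (colorIdeal_const_mem_minimalPrimes hG (w 0)) ?_
  · by_cases hi : i = w (t k)
    · exact Or.inl (hi ▸ hnone)
    by_cases hj : j = w (t k)
    · exact Or.inr (Or.inl (hj ▸ hnone))
    refine Or.inr (Or.inr ?_)
    by_cases hik : i ∈ (P k).verts
    · have hjk := S.mem_of_adj hik hi hij.symm
      rw [S.adj_iff_of_mem hik hjk] at hij
      obtain ⟨a, ha, rfl⟩ := (hg.mem_iff _).1 hik
      obtain ⟨b, hb, rfl⟩ := (hg.mem_iff _).1 hjk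
      rw [hg.adj_iff a b ha hb] at hij
      have hap : a ≠ p := by
        rintro rfl
        exact hi hgp
      have hbp : b ≠ p := by
        rintro rfl
        exact hj hgp
      rcases lt_or_gt_of_ne hap with h | h
      · rw [hlow a h, hlow b (by lia)]
      · rw [hhigh a ha h, hhigh b hb (by lia)]
    · have hjk : j ∉ (P k).verts := fun hjk => hik (S.mem_of_adj hjk hj hij)
      rw [hout i hik, hout j hjk]
  · have h1 := colorCodim_add_card_le c {g (p - 1), g (p + 1), w (t k + 1)} {w (t k)}
      (by simpa using hroots) (fun i hi => by
        simp only [c] at hi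
        rw [Finset.mem_singleton]
        split_ifs at hi with h
        exact h)
    have h2 := colorCodim_const_add_one (w 0)
    have h3 : ({g (p - 1), g (p + 1), w (t k + 1)} : Finset V).card = 3 := by
      rw [Finset.card_eq_three]
      refine ⟨_, _, _, fun h => ?_, fun h => ?_, fun h => ?_, rfl⟩
      · have := hg.inj _ _ (by lia) (by lia) h
        lia
      · exact hnext (h ▸ hgm _ (by lia))
      · exact hnext (h ▸ hgm _ (by lia))
    rw [h3, Finset.card_singleton] at h1
    lia

/-- `π` sends each vertex to the position of the cycle vertex at which it hangs. -/
structure IsFoot (G : SimpleGraph V) (w : Fin 4 → V) (P : ι → G.Subgraph) (t : ι → Fin 4)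
    (π : V → Fin 4) : Prop where
  cycle : ∀ i, π (w i) = i
  path : ∀ k v, v ∈ (P k).verts → π v = t k
  cover : ∀ v, v = w (π v) ∨ ∃ k, t k = π v ∧ v ∈ (P k).verts

lemma exists_isFoot (S : IsFourCycleWithPaths G w P t) : ∃ π, IsFoot G w P t π := by
  classical
  have hex : ∀ v, ∃ i, v = w i ∨ ∃ k, t k = i ∧ v ∈ (P k).verts := by
    intro v
    rcases S.cover v with ⟨i, rfl⟩ | ⟨k, hk⟩
    · exact ⟨i, Or.inl rfl⟩
    · exact ⟨t k, Or.inr ⟨k, rfl, hk⟩⟩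
  choose π hπ using hex
  refine ⟨π, fun i => ?_, fun k v hv => ?_, hπ⟩
  · rcases hπ (w i) with h | ⟨k, hk, hm⟩
    · exact (S.inj h).symm
    · rw [← hk, (S.mem_iff k i).1 hm]
  · rcases hπ v with h | ⟨l, hl, hm⟩
    · rw [h, S.mem_iff] at hv
      exact hv
    · rw [← hl, S.disj k l v hv hm]

variable {π : V → Fin 4}

lemma adj_iff_of_foot_ne (S : IsFourCycleWithPaths G w P t) (F : IsFoot G w P t π) {u v : V}
    (h : π u ≠ π v) : G.Adj u v ↔
      u = w (π u) ∧ v = w (π v) ∧ (π v = π u + 1 ∨ π u = π v + 1) := by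
  constructor
  · intro huv
    have hend : ∀ {x y}, π x ≠ π y → G.Adj x y → x = w (π x) := by
      intro x y hne hxy
      by_contra hx
      obtain ⟨k, hk, hm⟩ := (F.cover x).resolve_left hx
      have hy := S.mem_of_adj hm (by rwa [hk]) hxy.symm
      exact hne ((F.path k x hm).trans (F.path k y hy).symm)
    have hu := hend h huv
    have hv := hend h.symm huv.symm
    refine ⟨hu, hv, ?_⟩
    rwa [hu, hv, S.adj_cycle_iff] at huv
  · rintro ⟨hu, hv, hadj⟩
    rw [hu, hv]
    exact S.adj_cycle_iff.2 hadj

open Classical in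
/-- The colouring of `G` with two opposite cycle vertices removed, with representatives `ρ`. -/
def oppositeColoring (w : Fin 4 → V) (π : V → Fin 4) (ρ : Fin 4 → V) (i : Fin 4) (v : V) :
    Option V :=
  if v = w (π v) ∧ (π v = i ∨ π v = i + 2) then none else some (ρ (π v))

lemma oppositeColoring_eq_none {ρ : Fin 4 → V} {i : Fin 4} {v : V} :
    oppositeColoring w π ρ i v = none ↔ v = w (π v) ∧ (π v = i ∨ π v = i + 2) := by
  unfold oppositeColoring
  split_ifs with h
  · exact iff_of_true rfl h
  · exact iff_of_false nofun h

lemma oppositeColoring_eq_some {ρ : Fin 4 → V} {i : Fin 4} {u v : V} :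
    oppositeColoring w π ρ i v = some u ↔
      ¬ (v = w (π v) ∧ (π v = i ∨ π v = i + 2)) ∧ ρ (π v) = u := by
  simp only [oppositeColoring]
  split_ifs with h
  · exact iff_of_false nofun fun h' => h'.1 h
  · rw [Option.some_inj, and_iff_right h]

lemma oppositeColoring_of_adj (S : IsFourCycleWithPaths G w P t) (F : IsFoot G w P t π)
    (ρ : Fin 4 → V) (i : Fin 4) (u v : V) (huv : G.Adj u v) :
    oppositeColoring w π ρ i u = none ∨ oppositeColoring w π ρ i v = none ∨
      oppositeColoring w π ρ i u = oppositeColoring w π ρ i v := by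
  by_cases hu : oppositeColoring w π ρ i u = none
  · exact Or.inl hu
  by_cases hv : oppositeColoring w π ρ i v = none
  · exact Or.inr (Or.inl hv)
  refine Or.inr (Or.inr ?_)
  rw [oppositeColoring_eq_none] at hu hv
  have h : π u = π v := by
    by_contra hne
    obtain ⟨h1, h2, h3⟩ := (S.adj_iff_of_foot_ne F hne).1 huv
    have h4 : ¬ (π u = i ∨ π u = i + 2) := fun h => hu ⟨h1, h⟩
    have h5 : ¬ (π v = i ∨ π v = i + 2) := fun h => hv ⟨h2, h⟩
    generalize π u = a at h3 h4
    generalize π v = b at h3 h5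
    clear * - h3 h4 h5
    revert a b i
    decide
  simp only [oppositeColoring, if_neg hu, if_neg hv, h]

/-- If paths are attached at two opposite vertices of the cycle, removing these vertices leaves at
least four components. -/
lemma not_isUnmixed_of_opposite_whiskers {K : Type*} [Field K] [Fintype V]
    (S : IsFourCycleWithPaths G w P t)
    (F : IsFoot G w P t π) (hG : G.Connected) {i : Fin 4}
    (h1 : ∃ v, π v = i ∧ v ≠ w i) (h2 : ∃ v, π v = i + 2 ∧ v ≠ w (i + 2)) :
    ¬ IsUnmixed (binomialEdgeIdeal K G) := by
  classical
  obtain ⟨ρ, hρ, hρw⟩ : ∃ ρ : Fin 4 → V, (∀ j, π (ρ j) = j) ∧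
      ∀ j, j = i ∨ j = i + 2 → ρ j ≠ w j := by
    have hex : ∀ j, ∃ v, π v = j ∧ (j = i ∨ j = i + 2 → v ≠ w j) := by
      intro j
      by_cases hj : j = i
      · subst hj
        exact h1.imp fun v hv => ⟨hv.1, fun _ => hv.2⟩
      by_cases hj' : j = i + 2
      · subst hj'
        exact h2.imp fun v hv => ⟨hv.1, fun _ => hv.2⟩
      · exact ⟨w j, F.cycle j, fun h => by tauto⟩
    choose ρ hρ using hex
    exact ⟨ρ, fun j => (hρ j).1, fun j => (hρ j).2⟩
  have hroot : ∀ j, oppositeColoring w π ρ i (ρ j) = some (ρ j) := fun j => by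
    rw [oppositeColoring_eq_some, hρ]
    exact ⟨fun h => hρw j h.2 h.1, rfl⟩
  refine not_isUnmixed_of_colorCodim_lt (c := oppositeColoring w π ρ i) (fun u v huv => ?_)
    (by simp [IsRooted]) (binomialEdgeIdeal_le_colorIdeal (S.oppositeColoring_of_adj F ρ i))
    (colorIdeal_const_mem_minimalPrimes hG (w 0)) ?_
  · rw [← (oppositeColoring_eq_some.1 huv).2]
    exact hroot _
  · have h3 := colorCodim_add_card_le (oppositeColoring w π ρ i) (Finset.univ.image ρ)
      {w i, w (i + 2)} (by simpa using hroot) fun v hv => by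
        obtain ⟨hv, h | h⟩ := oppositeColoring_eq_none.1 hv <;> rw [h] at hv <;> simp [hv]
    have h4 := colorCodim_const_add_one (w 0)
    rw [Finset.card_image_of_injective _ (Function.LeftInverse.injective hρ)] at h3
    have h5 := Finset.card_le_two (a := w i) (b := w (i + 2))
    simp only [Finset.card_univ, Fintype.card_fin] at h3
    lia

lemma _root_.IsPathEnum.reflTransGen {H : G.Subgraph} {m : ℕ} {g : ℕ → V}
    (h : IsPathEnum H m g) {a b : ℕ} (ha : a < m) (hb : b < m) :
    Relation.ReflTransGen H.Adj (g a) (g b) := by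
  have key : ∀ d a, a + d < m → Relation.ReflTransGen H.Adj (g a) (g (a + d)) := by
    intro d
    induction d with
    | zero => exact fun a _ => .refl
    | succ d ih =>
      exact fun a had => (ih a (by lia)).tail
        ((h.adj_iff _ _ (by lia) had).2 (Or.inl (by lia)))
  rcases le_total a b with hab | hab
  · obtain ⟨d, rfl⟩ := Nat.exists_eq_add_of_le hab
    exact key d a hb
  · obtain ⟨d, rfl⟩ := Nat.exists_eq_add_of_le hab
    have hs : Std.Symm H.Adj := ⟨fun _ _ h => h.symm⟩
    exact Std.Symm.symm _ _ (key d b ha)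

/-- If no path is attached at two opposite vertices of the cycle, these two vertices form a minimal
cut set leaving only two components. -/
lemma not_isUnmixed_of_opposite_bare {K : Type*} [Field K] [Fintype V]
    (S : IsFourCycleWithPaths G w P t)
    (F : IsFoot G w P t π) {i : Fin 4}
    (hbare : ∀ v, π v = i ∨ π v = i + 2 → v = w (π v)) :
    ¬ IsUnmixed (binomialEdgeIdeal K G) := by
  classical
  have hcw : ∀ j, ¬ (j = i ∨ j = i + 2) → oppositeColoring w π w i (w j) = some (w j) := by
    intro j hj
    rw [oppositeColoring_eq_some, F.cycle]
    tauto
  have hsome : ∀ u v, oppositeColoring w π w i u = some v →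
      ¬ (π u = i ∨ π u = i + 2) ∧ v = w (π u) := by
    intro u v huv
    obtain ⟨h1, rfl⟩ := oppositeColoring_eq_some.1 huv
    exact ⟨fun h => h1 ⟨hbare u h, h⟩, rfl⟩
  have hrooted : IsRooted (oppositeColoring w π w i) := by
    intro u v huv
    obtain ⟨h1, rfl⟩ := hsome u v huv
    exact hcw _ h1
  refine not_isUnmixed_of_colorCodim_lt (c := fun _ => some (w 0)) (by simp [IsRooted]) hrooted
    (binomialEdgeIdeal_le_colorIdeal (by simp))
    (colorIdeal_mem_minimalPrimes hrooted (S.oppositeColoring_of_adj F w i) ?_ ?_) ?_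
  · intro u v huv
    obtain ⟨h1, rfl⟩ := hsome u v huv
    rcases F.cover u with h | ⟨k, hk, hm⟩
    · rw [← h]
    · have hw : w (π u) ∈ (P k).verts := (S.mem_iff _ _).2 hk.symm
      obtain ⟨m, g, p, hg, hp, hgp⟩ := (S.path k).exists_isPathEnum hw
      obtain ⟨a, ha, rfl⟩ := (hg.mem_iff _).1 hm
      have hr := hg.reflTransGen ha hp
      rw [hgp] at hr
      refine Relation.ReflTransGen.mono (fun x y hxy => ⟨hxy.adj_sub, fun h => ?_⟩) _ _ hr
      have hx := (oppositeColoring_eq_none.1 h).2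
      rw [F.path k x ((P k).edge_vert hxy), hk] at hx
      exact h1 hx
  · intro u hu
    obtain ⟨hu, h⟩ := oppositeColoring_eq_none.1 hu
    have ha := hcw (i + 1) (by clear * -; revert i; decide)
    have hb := hcw (i + 3) (by clear * -; revert i; decide)
    refine ⟨w (i + 1), w (i + 3), ?_, ?_, by simp [ha], by simp [hb], ?_⟩
    · rw [hu, S.adj_cycle_iff]
      generalize π u = j at h
      clear * - h
      revert i j
      decide
    · rw [hu, S.adj_cycle_iff]
      generalize π u = j at h
      clear * - h
      revert i j
      decide
    · rw [ha, hb]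
      intro hab
      have := S.inj (Option.some.inj hab)
      clear * - this
      revert i
      decide
  · have h3 := card_add_card_le_colorCodim (oppositeColoring w π w i) {w (i + 1), w (i + 3)}
      {w i, w (i + 2)} (fun v hv => by
        obtain ⟨h1, h2⟩ := hsome v v hv
        have h4 : π v = i + 1 ∨ π v = i + 3 := by
          generalize π v = j at h1
          clear * - h1
          revert i j
          decide
        rcases h4 with h | h <;> rw [h] at h2 <;> simp [h2]) fun v hv => by
        rw [Finset.mem_insert, Finset.mem_singleton] at hv
        rw [oppositeColoring_eq_none]
        rcases hv with rfl | rfl <;> simp [F.cycle]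
    have h4 := colorCodim_const_add_one (w 0)
    have h5 := Finset.card_le_two (a := w (i + 1)) (b := w (i + 3))
    have h6 : ({w i, w (i + 2)} : Finset V).card = 2 := Finset.card_pair fun h => by
      have := S.inj h
      clear * - this
      revert i
      decide
    lia

/-- `u 0, …, u (m - 1)` is a path of `G` starting with the cycle vertices `w j` and `w i` and
running through all the vertices hanging at one of these two. -/
structure IsArm (G : SimpleGraph V) (w : Fin 4 → V) (π : V → Fin 4) (j i : Fin 4) (m : ℕ)
    (u : ℕ → V) : Prop where
  inj : ∀ a b, a < m → b < m → u a = u b → a = b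
  adj_iff : ∀ a b, a < m → b < m → (G.Adj (u a) (u b) ↔ a + 1 = b ∨ b + 1 = a)
  foot : ∀ a < m, (a = 0 ∧ π (u a) = j) ∨ (0 < a ∧ π (u a) = i)
  eq_iff : ∀ a < m, u a = w (π (u a)) ↔ a ≤ 1
  cover : ∀ v, π v = j ∨ π v = i → ∃ a < m, u a = v

lemma exists_isArm {K : Type*} [Field K] [Fintype V]
    (S : IsFourCycleWithPaths G w P t) (F : IsFoot G w P t π) (hG : G.Connected)
    (hI : IsUnmixed (binomialEdgeIdeal K G)) {j i : Fin 4} (hji : i = j + 1 ∨ j = i + 1)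
    (hi : ∃ v, π v = i ∧ v ≠ w i) (hj : ∀ v, π v = j → v = w j) :
    ∃ m u, 3 ≤ m ∧ IsArm G w π j i m u := by
  obtain ⟨v, hv, hvw⟩ := hi
  have hne : j ≠ i := by
    rintro rfl
    simp at hji
  obtain ⟨k, hk, hm⟩ := (F.cover v).resolve_left (by rwa [hv])
  rw [hv] at hk
  obtain ⟨m, g, hg, hg0⟩ : ∃ m g, IsPathEnum (P k) m g ∧ g 0 = w i := by
    obtain ⟨m, g, p, hg, hp, hgp⟩ := (S.path k).exists_isPathEnum ((S.mem_iff k i).2 hk.symm)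
    rcases Nat.eq_zero_or_pos p with rfl | hp0
    · exact ⟨m, g, hg, hgp⟩
    by_cases hpm : p + 1 < m
    · exact absurd hI (S.not_isUnmixed_of_inner hG hg hp0 hpm (by rw [hgp, hk]))
    · refine ⟨m, _, hg.reverse, ?_⟩
      rw [← hgp]
      congr 1
      lia
  have hgm : ∀ a < m, g a ∈ (P k).verts := fun a ha => (hg.mem_iff _).2 ⟨a, ha, rfl⟩
  have hgπ : ∀ a < m, π (g a) = i := fun a ha => (F.path k _ (hgm a ha)).trans hk
  have hm2 : 2 ≤ m := by
    obtain ⟨a, ha, rfl⟩ := (hg.mem_iff _).1 hm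
    have : a ≠ 0 := by
      rintro rfl
      exact hvw hg0
    lia
  have hgw : ∀ a < m, g a = w i ↔ a = 0 := fun a ha =>
    ⟨fun h => hg.inj a 0 ha (by lia) (h.trans hg0.symm), fun h => h ▸ hg0⟩
  have hjg : ∀ a < m, G.Adj (w j) (g a) ↔ a = 0 := fun a ha => by
    rw [S.adj_iff_of_foot_ne F (by rwa [F.cycle, hgπ a ha]), F.cycle, hgπ a ha, hgw a ha]
    tauto
  have hwg : ∀ a < m, w j ≠ g a := fun a ha h => hne (by rw [← F.cycle j, h, hgπ a ha])
  refine ⟨m + 1, fun a => a.casesOn (w j) g, by lia, ?_, ?_, ?_, ?_, ?_⟩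
  · rintro (_ | a) (_ | b) ha hb h
    · rfl
    · exact absurd h (hwg b (by lia))
    · exact absurd h.symm (hwg a (by lia))
    · rw [hg.inj a b (by lia) (by lia) h]
  · rintro (_ | a) (_ | b) ha hb
    · simp
    · have := hjg b (by lia)
      simp [this, eq_comm]
    · have := hjg a (by lia)
      simp [G.adj_comm, this, eq_comm]
    · have := (S.adj_iff_of_mem (hgm a (by lia)) (hgm b (by lia))).trans
        (hg.adj_iff a b (by lia) (by lia))
      simp [this]
  · rintro (_ | a) ha
    · exact Or.inl ⟨rfl, F.cycle j⟩
    · exact Or.inr ⟨by lia, hgπ a (by lia)⟩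
  · rintro (_ | a) ha
    · simp [F.cycle]
    · have := hgw a (by lia)
      simp [hgπ a (by lia), this]
  · rintro v (hv | hv)
    · exact ⟨0, by lia, (hj v hv).symm⟩
    · rcases F.cover v with h | ⟨l, hl, hml⟩
      · exact ⟨1, by lia, by rw [h, hv]; exact hg0⟩
      · rw [S.attach_injective (hl.trans (hv.trans hk.symm))] at hml
        obtain ⟨a, ha, rfl⟩ := (hg.mem_iff _).1 hml
        exact ⟨a + 1, by lia, rfl⟩

lemma nonempty_iso_graphG4 (S : IsFourCycleWithPaths G w P t) (F : IsFoot G w P t π) {p : Fin 4}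
    {m n : ℕ} {u v : ℕ → V} (hu : IsArm G w π (p + 3) p m u)
    (hv : IsArm G w π (p + 2) (p + 1) n v) : Nonempty (G ≃g graphG4 m n) := by
  have hfoot : ∀ a < m, ∀ b < n, π (u a) ≠ π (v b) := by
    intro a ha b hb
    have h1 := hu.foot a ha
    have h2 := hv.foot b hb
    generalize π (u a) = x at h1
    generalize π (v b) = y at h2
    have h3 : x = p + 3 ∨ x = p := by tauto
    have h4 : y = p + 2 ∨ y = p + 1 := by tauto
    clear * - h3 h4
    revert p x y
    decide
  have hadj : ∀ a < m, ∀ b < n,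
      (G.Adj (u a) (v b) ↔ (a = 0 ∧ b = 0) ∨ (a = 1 ∧ b = 1)) := by
    intro a ha b hb
    rw [S.adj_iff_of_foot_ne F (hfoot a ha b hb), hu.eq_iff a ha, hv.eq_iff b hb]
    have hp : ∀ p : Fin 4, (p + 2 = p + 3 + 1 ∨ p + 3 = p + 2 + 1) ∧
        ¬ (p + 1 = p + 3 + 1 ∨ p + 3 = p + 1 + 1) ∧ ¬ (p + 2 = p + 1 ∨ p = p + 2 + 1) := by
      decide
    obtain ⟨hp1, hp2, hp3⟩ := hp p
    rcases hu.foot a ha with ⟨ha0, h1⟩ | ⟨ha0, h1⟩ <;>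
      rcases hv.foot b hb with ⟨hb0, h2⟩ | ⟨hb0, h2⟩ <;> rw [h1, h2]
    · simp only [hp1]
      lia
    · simp only [hp2]
      lia
    · simp only [hp3]
      lia
    · simp only [true_or]
      lia
  let f : Fin m ⊕ Fin n → V := Sum.elim (fun a => u a) fun b => v b
  have hf : Function.Bijective f := by
    constructor
    · rintro (a | a) (b | b) h
      · exact congrArg _ (Fin.ext (hu.inj a b a.2 b.2 h))
      · exact absurd (congrArg π h) (hfoot a a.2 b b.2)
      · exact absurd (congrArg π h).symm (hfoot b b.2 a a.2)
      · exact congrArg _ (Fin.ext (hv.inj a b a.2 b.2 h))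
    · intro x
      have hx : (π x = p + 3 ∨ π x = p) ∨ π x = p + 2 ∨ π x = p + 1 := by
        generalize π x = y
        clear * -
        revert p y
        decide
      rcases hx with hx | hx
      · obtain ⟨a, ha, rfl⟩ := hu.cover x hx
        exact ⟨Sum.inl ⟨a, ha⟩, rfl⟩
      · obtain ⟨a, ha, rfl⟩ := hv.cover x hx
        exact ⟨Sum.inr ⟨a, ha⟩, rfl⟩
  refine ⟨RelIso.symm ⟨Equiv.ofBijective f hf, fun {x y} => ?_⟩⟩
  rw [graphG4, SimpleGraph.fromRel_adj]
  rcases x with a | a <;> rcases y with b | b <;>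
    simp only [Equiv.ofBijective_apply, f, Sum.elim_inl, Sum.elim_inr, g4Rel]
  · rw [hu.adj_iff a b a.2 b.2, ne_eq, Sum.inl.injEq, Fin.ext_iff]
    lia
  · rw [hadj a a.2 b b.2]
    simp
  · rw [G.adj_comm, hadj b b.2 a a.2]
    simp
  · rw [hv.adj_iff a b a.2 b.2, ne_eq, Sum.inr.injEq, Fin.ext_iff]
    lia

end IsFourCycleWithPaths

end CycleWithPaths

lemma exists_consecutive_of_opposite {W : Fin 4 → Prop} (hW : ∀ i, ¬ (W i ∧ W (i + 2)))
    (hB : ∀ i, W i ∨ W (i + 2)) : ∃ p, W p ∧ W (p + 1) ∧ ¬ W (p + 2) ∧ ¬ W (p + 3) := by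
  have h0 : ¬ (W 0 ∧ W 2) := hW 0
  have h1 : ¬ (W 1 ∧ W 3) := hW 1
  have h2 : W 0 ∨ W 2 := hB 0
  have h3 : W 1 ∨ W 3 := hB 1
  by_cases h4 : W 0 <;> by_cases h5 : W 1
  · exact ⟨0, h4, h5, fun h => h0 ⟨h4, h⟩, fun h => h1 ⟨h5, h⟩⟩
  · exact ⟨3, h3.resolve_left h5, h4, h5, fun h => h0 ⟨h4, h⟩⟩
  · exact ⟨1, h5, h2.resolve_left h4, fun h => h1 ⟨h5, h⟩, h4⟩
  · exact ⟨2, h2.resolve_left h4, h3.resolve_left h5, h4, h5⟩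

/-- Let `G` be a connected unicyclic graph of the form
`G = C_4 ∪ (P_1 ∪ ⋯ ∪ P_r)`, where `C_4` is a cycle of length `4`, each `P_i` is a
path graph meeting `C_4` in exactly one vertex, and the `P_i` are pairwise
vertex-disjoint. If `G` does not belong to the family `𝒢₄`, then `J_G` is not
unmixed. -/
theorem binomialEdgeIdeal_not_unmixed_of_c4_not_mem_G4
    (K : Type*) [Field K] (n : ℕ) (G : SimpleGraph (Fin n))
    (hConn : G.Connected) (hUni : G.edgeSet.ncard = n)
    (r : ℕ) (hr : r ≤ 4) (C : G.Subgraph) (P : Fin r → G.Subgraph)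
    (hC : IsCycleGraphOfLength C.coe 4)
    (hP : ∀ i, IsPathGraph (P i).coe)
    (hPC : ∀ i, ((P i).verts ∩ C.verts).ncard = 1)
    (hPP : ∀ i j, i ≠ j → (P i).verts ∩ (P j).verts = ∅)
    (hcover : C ⊔ (⨆ i, P i) = ⊤)
    (hG4 : ¬ ∃ (a b : ℕ), 3 ≤ a ∧ 3 ≤ b ∧ Nonempty (G ≃g graphG4 a b)) :
    ¬ IsUnmixed (binomialEdgeIdeal K G) := by
  obtain ⟨e, he⟩ := hC
  obtain ⟨w, hw, hinj, hwadj⟩ : ∃ w : Fin 4 → Fin n, (∀ v, v ∈ C.verts ↔ ∃ i, w i = v) ∧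
      Function.Injective w ∧ ∀ a b, C.Adj a b ↔
        ∃ i, (a = w i ∧ b = w (i + 1)) ∨ (b = w i ∧ a = w (i + 1)) := by
    have hstep : ∀ i j : Fin 4, ((i : ℕ) + 1) % 4 = j ↔ j = i + 1 := by decide
    have hwC : ∀ i j, C.Adj (e.symm i) (e.symm j) ↔ j = i + 1 ∨ i = j + 1 := fun i j => by
      simpa [hstep] using he (e.symm i) (e.symm j)
    refine ⟨fun i => e.symm i, fun v => ⟨fun hv => ⟨e ⟨v, hv⟩, by simp⟩, ?_⟩,
      Subtype.val_injective.comp e.symm.injective, fun a b => ⟨fun hab => ?_, ?_⟩⟩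
    · rintro ⟨i, rfl⟩
      exact (e.symm i).2
    · obtain ⟨i, hi⟩ := e.symm.surjective ⟨a, C.edge_vert hab⟩
      obtain ⟨j, hj⟩ := e.symm.surjective ⟨b, C.edge_vert hab.symm⟩
      obtain rfl : (e.symm i : Fin n) = a := congrArg Subtype.val hi
      obtain rfl : (e.symm j : Fin n) = b := congrArg Subtype.val hj
      rcases (hwC i j).1 hab with rfl | rfl
      · exact ⟨i, Or.inl ⟨rfl, rfl⟩⟩
      · exact ⟨j, Or.inr ⟨rfl, rfl⟩⟩
    · rintro ⟨i, ⟨rfl, rfl⟩ | ⟨rfl, rfl⟩⟩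
      · exact (hwC _ _).2 (Or.inl rfl)
      · exact (hwC _ _).2 (Or.inr rfl)
  obtain ⟨t, ht⟩ : ∃ t : Fin r → Fin 4, ∀ k i, w i ∈ (P k).verts ↔ i = t k := by
    have hex : ∀ k, ∃ i, ∀ j, w j ∈ (P k).verts ↔ j = i := by
      intro k
      obtain ⟨x, hx⟩ := Set.ncard_eq_one.1 (hPC k)
      have hxm : x ∈ (P k).verts ∩ C.verts := hx ▸ rfl
      obtain ⟨i, rfl⟩ := (hw x).1 hxm.2
      refine ⟨i, fun j => ⟨fun hj => hinj ?_, fun hj => hj ▸ hxm.1⟩⟩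
      have hjm : w j ∈ (P k).verts ∩ C.verts := ⟨hj, (hw _).2 ⟨j, rfl⟩⟩
      rwa [hx] at hjm
    choose t ht using hex
    exact ⟨t, ht⟩
  have S : IsFourCycleWithPaths G w P t := by
    refine ⟨hinj, fun a b => ?_, fun v => ?_, ht, fun k l v hk hl => ?_, hP⟩
    · rw [← hwadj, ← SimpleGraph.Subgraph.top_adj, ← hcover, SimpleGraph.Subgraph.sup_adj,
        SimpleGraph.Subgraph.iSup_adj]
    · rw [← hw]
      have hv : v ∈ (⊤ : G.Subgraph).verts := trivial
      rwa [← hcover, SimpleGraph.Subgraph.verts_sup, SimpleGraph.Subgraph.verts_iSup,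
        Set.mem_union, Set.mem_iUnion] at hv
    · by_contra hkl
      have hv : v ∈ (P k).verts ∩ (P l).verts := ⟨hk, hl⟩
      rwa [hPP k l hkl] at hv
  obtain ⟨π, F⟩ := S.exists_isFoot
  intro hI
  let W : Fin 4 → Prop := fun i => ∃ v, π v = i ∧ v ≠ w i
  have hW : ∀ i, ¬ (W i ∧ W (i + 2)) := fun i h =>
    S.not_isUnmixed_of_opposite_whiskers F hConn h.1 h.2 hI
  have hbare : ∀ i, ¬ W i → ∀ v, π v = i → v = w i := by
    intro i h v hv
    by_contra hvw
    exact h ⟨v, hv, hvw⟩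
  have hB : ∀ i, W i ∨ W (i + 2) := by
    intro i
    by_contra! h
    refine S.not_isUnmixed_of_opposite_bare F (i := i) (fun v hv => ?_) hI
    rcases hv with hv | hv
    · rw [hv, ← hbare i h.1 v hv]
    · rw [hv, ← hbare _ h.2 v hv]
  obtain ⟨p, hp0, hp1, hp2, hp3⟩ : ∃ p, W p ∧ W (p + 1) ∧ ¬ W (p + 2) ∧ ¬ W (p + 3) :=
    exists_consecutive_of_opposite hW hB
  obtain ⟨a, u, ha, hu⟩ := S.exists_isArm F hConn hI (j := p + 3) (i := p)
    (by clear * -; revert p; decide) hp0 (hbare _ hp3)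
  obtain ⟨b, v, hb, hv⟩ := S.exists_isArm F hConn hI (j := p + 2) (i := p + 1)
    (by clear * -; revert p; decide) hp1 (hbare _ hp2)
  exact hG4 ⟨a, b, ha, hb, S.nonempty_iso_graphG4 F hu hv⟩

end
end

section
/- For every T ⊆ [n], the ideal P_T(G) is a prime ideal of S. -/
open MvPolynomial

noncomputable section

/-- The prime `P_T(G)` associated with a subset `T` of the vertices: it is generated
by the variables `x_i, y_i` for `i ∈ T` together with the binomial edge ideals of the
complete graphs on the connected components of the subgraph of `G` induced on the
complement of `T` (i.e. all `2`-minors `x_i y_j - x_j y_i` for distinct vertices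
`i, j ∉ T` lying in the same connected component of that induced subgraph). -/
def PTIdeal (K : Type*) [Field K] {n : ℕ} (G : SimpleGraph (Fin n)) (T : Set (Fin n)) :
    Ideal (MvPolynomial (Fin n ⊕ Fin n) K) :=
  Ideal.span
    ({ f | ∃ i ∈ T, f = X (Sum.inl i) } ∪ { f | ∃ i ∈ T, f = X (Sum.inr i) } ∪
      { f | ∃ (i j : Fin n) (hi : i ∈ Tᶜ) (hj : j ∈ Tᶜ), i ≠ j ∧
        (G.induce Tᶜ).Reachable ⟨i, hi⟩ ⟨j, hj⟩ ∧
        f = X (Sum.inl i) * X (Sum.inr j) - X (Sum.inl j) * X (Sum.inr i) })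

/-- The number of connected components of the subgraph of `G` induced on `U`. -/
def cNum {n : ℕ} (G : SimpleGraph (Fin n)) (U : Set (Fin n)) : ℕ :=
  Nat.card (G.induce U).ConnectedComponent

/-- `T` has the cutpoint property for `G`: every `i ∈ T` is a cutpoint of the
subgraph of `G` induced on `([n] ∖ T) ∪ {i}`, i.e. removing `i` from that graph
increases the number of connected components. -/
def HasCutpointProperty {n : ℕ} (G : SimpleGraph (Fin n)) (T : Set (Fin n)) : Prop :=
  ∀ i ∈ T, cNum G (Tᶜ ∪ {i}) < cNum G Tᶜ

section Toric

variable {σ τ K : Type*} [Field K]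

lemma exists_of_linearCombination_apply_ne_zero (e : σ → τ →₀ ℕ) (m : σ →₀ ℕ) (x : τ)
    (h : Finsupp.linearCombination ℕ e m x ≠ 0) : ∃ v, m v ≠ 0 ∧ e v x ≠ 0 := by
  contrapose! h
  rw [Finsupp.linearCombination_apply, Finsupp.sum, Finsupp.finsetSum_apply]
  refine Finset.sum_eq_zero fun v hv => ?_
  simp [h v (Finsupp.mem_support_iff.mp hv)]

lemma exists_eq_single_add {m : σ →₀ ℕ} {v : σ} (h : m v ≠ 0) :
    ∃ r, m = Finsupp.single v 1 + r :=
  le_iff_exists_add.mp (Finsupp.single_le_iff.mpr (Nat.one_le_iff_ne_zero.mpr h))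

lemma monomial_single_add_one (v : σ) (r : σ →₀ ℕ) :
    monomial (Finsupp.single v 1 + r) (1 : K) = X v * monomial r 1 := by
  rw [X, monomial_mul, one_mul]

/-- The monomial algebra homomorphism sending `X v` to the monomial with exponent `e v`. -/
def toricHom (K : Type*) [Field K] (e : σ → τ →₀ ℕ) :
    MvPolynomial σ K →ₐ[K] MvPolynomial τ K :=
  aeval fun v => monomial (e v) 1

lemma toricHom_monomial (e : σ → τ →₀ ℕ) (m : σ →₀ ℕ) :
    toricHom K e (monomial m 1) = monomial (Finsupp.linearCombination ℕ e m) 1 := by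
  rw [toricHom, aeval_monomial, map_one, one_mul, Finsupp.linearCombination_apply,
    monomial_finsupp_sum_index, Finsupp.prod, Finsupp.prod]
  simp [monomial_pow]

/-- An ideal identifying any two monomials with the same image contains the toric ideal. -/
lemma ker_toricHom_le (e : σ → τ →₀ ℕ) (I : Ideal (MvPolynomial σ K))
    (h : ∀ m m', Finsupp.linearCombination ℕ e m = Finsupp.linearCombination ℕ e m' →
      monomial m 1 - monomial m' 1 ∈ I) :
    RingHom.ker (toricHom K e) ≤ I := by
  let ψ : MvPolynomial τ K →ₗ[K] MvPolynomial σ K ⧸ I :=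
    (basisMonomials τ K).constr K fun d =>
      Ideal.Quotient.mk I (monomial (Function.invFun (Finsupp.linearCombination ℕ e) d) 1)
  have hψ : ψ ∘ₗ (toricHom K e).toLinearMap = (Ideal.Quotient.mkₐ K I).toLinearMap := by
    refine (basisMonomials σ K).ext fun m => ?_
    have hb : ∀ d, ψ (monomial d 1) = Ideal.Quotient.mk I
        (monomial (Function.invFun (Finsupp.linearCombination ℕ e) d) 1) := fun d => by
      simpa only [coe_basisMonomials] using (basisMonomials τ K).constr_basis K _ d
    simp only [coe_basisMonomials, LinearMap.comp_apply, AlgHom.toLinearMap_apply,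
      toricHom_monomial, hb, Ideal.Quotient.mkₐ_eq_mk]
    exact Ideal.Quotient.eq.mpr (h _ _ (Function.invFun_eq ⟨m, rfl⟩))
  intro f hf
  have := LinearMap.congr_fun hψ f
  rw [LinearMap.comp_apply, AlgHom.toLinearMap_apply, (RingHom.mem_ker).mp hf, map_zero] at this
  exact Ideal.Quotient.eq_zero_iff_mem.mp this.symm

end Toric

section Segre

variable {V C K : Type*} [Field K]

/-- The exponents of the parametrization `x_i ↦ t_i a_{c i}`, `y_i ↦ t_i b_{c i}`. -/
def segreExp (c : V → C) : V ⊕ V → (V ⊕ C ⊕ C →₀ ℕ) :=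
  Sum.elim
    (fun i => Finsupp.single (Sum.inl i) 1 + Finsupp.single (Sum.inr (Sum.inl (c i))) 1)
    (fun i => Finsupp.single (Sum.inl i) 1 + Finsupp.single (Sum.inr (Sum.inr (c i))) 1)

lemma eq_of_segreExp_inl_ne_zero {c : V → C} {v : V ⊕ V} {j : V}
    (h : segreExp c v (Sum.inl j) ≠ 0) : v = Sum.inl j ∨ v = Sum.inr j := by
  classical
  rcases v with i | i <;> simpa [segreExp, Finsupp.single_apply] using h

lemma eq_of_segreExp_inr_inl_ne_zero {c : V → C} {v : V ⊕ V} {a : C}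
    (h : segreExp c v (Sum.inr (Sum.inl a)) ≠ 0) : ∃ i, v = Sum.inl i ∧ c i = a := by
  classical
  rcases v with i | i <;> simp [segreExp, Finsupp.single_apply] at h
  exact ⟨i, rfl, h⟩

lemma eq_of_segreExp_inr_inr_ne_zero {c : V → C} {v : V ⊕ V} {a : C}
    (h : segreExp c v (Sum.inr (Sum.inr a)) ≠ 0) : ∃ i, v = Sum.inr i ∧ c i = a := by
  classical
  rcases v with i | i <;> simp [segreExp, Finsupp.single_apply] at h
  exact ⟨i, rfl, h⟩

/-- If the image of `m` is divisible by the image of `X v`, then modulo the minors `m` is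
divisible by `X v`. -/
lemma exists_single_add_of_segreExp (c : V → C) (I : Ideal (MvPolynomial (V ⊕ V) K))
    (hI : ∀ i j, c i = c j →
      (X (Sum.inl i) * X (Sum.inr j) - X (Sum.inl j) * X (Sum.inr i) :
        MvPolynomial (V ⊕ V) K) ∈ I)
    (v : V ⊕ V) (m r' : V ⊕ V →₀ ℕ)
    (h : Finsupp.linearCombination ℕ (segreExp c) m =
      Finsupp.linearCombination ℕ (segreExp c) (Finsupp.single v 1 + r')) :
    ∃ r, Finsupp.linearCombination ℕ (segreExp c) r =
        Finsupp.linearCombination ℕ (segreExp c) r' ∧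
      (monomial m 1 - X v * monomial r 1 : MvPolynomial (V ⊕ V) K) ∈ I := by
  have hpos : ∀ x, segreExp c v x ≠ 0 → ∃ w, m w ≠ 0 ∧ segreExp c w x ≠ 0 := fun x hx => by
    refine exists_of_linearCombination_apply_ne_zero _ _ _ ?_
    rw [h, map_add, Finsupp.linearCombination_single, one_smul, Finsupp.add_apply]
    omega
  by_cases hv : m v = 0
  swap
  · obtain ⟨r, rfl⟩ := exists_eq_single_add hv
    refine ⟨r, ?_, ?_⟩
    · rw [map_add, map_add] at h
      exact add_left_cancel h
    · simp [monomial_single_add_one]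
  have hswap : ∀ u w w', m u ≠ 0 → m w ≠ 0 → u ≠ w →
      segreExp c u + segreExp c w = segreExp c v + segreExp c w' →
      (X u * X w - X v * X w' : MvPolynomial (V ⊕ V) K) ∈ I →
      ∃ r, Finsupp.linearCombination ℕ (segreExp c) r =
        Finsupp.linearCombination ℕ (segreExp c) r' ∧
      (monomial m 1 - X v * monomial r 1 : MvPolynomial (V ⊕ V) K) ∈ I := by
    intro u w w' hu hw huw he hmem
    obtain ⟨r₁, rfl⟩ := exists_eq_single_add hu
    rw [Finsupp.add_apply, Finsupp.single_eq_of_ne huw.symm, zero_add] at hw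
    obtain ⟨r₂, rfl⟩ := exists_eq_single_add hw
    refine ⟨Finsupp.single w' 1 + r₂, ?_, ?_⟩
    · simp only [map_add, Finsupp.linearCombination_single, one_smul] at h ⊢
      rw [← add_assoc, he, add_assoc] at h
      exact add_left_cancel h
    · simp only [monomial_single_add_one]
      have := I.mul_mem_right (monomial r₂ 1) hmem
      convert this using 1
      ring
  rcases v with j | j
  · obtain ⟨w, hw, hw'⟩ := hpos (Sum.inl j) (by simp [segreExp])
    obtain ⟨u, hu, hu'⟩ := hpos (Sum.inr (Sum.inl (c j))) (by simp [segreExp])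
    obtain ⟨i, rfl, hij⟩ := eq_of_segreExp_inr_inl_ne_zero hu'
    rcases eq_of_segreExp_inl_ne_zero hw' with rfl | rfl
    · exact absurd hv hw
    refine hswap _ _ (Sum.inr i) hu hw (by simp) ?_ (hI i j hij)
    simp only [segreExp, Sum.elim_inl, Sum.elim_inr, hij]
    abel
  · obtain ⟨w, hw, hw'⟩ := hpos (Sum.inl j) (by simp [segreExp])
    obtain ⟨u, hu, hu'⟩ := hpos (Sum.inr (Sum.inr (c j))) (by simp [segreExp])
    obtain ⟨i, rfl, hij⟩ := eq_of_segreExp_inr_inr_ne_zero hu'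
    rcases eq_of_segreExp_inl_ne_zero hw' with rfl | rfl
    swap
    · exact absurd hv hw
    refine hswap _ _ (Sum.inl i) hu hw (by simp) ?_ ?_
    · simp only [segreExp, Sum.elim_inl, Sum.elim_inr, hij]
      abel
    · convert hI j i hij.symm using 1
      ring

lemma monomial_sub_mem_of_segreExp (c : V → C) (I : Ideal (MvPolynomial (V ⊕ V) K))
    (hI : ∀ i j, c i = c j →
      (X (Sum.inl i) * X (Sum.inr j) - X (Sum.inl j) * X (Sum.inr i) :
        MvPolynomial (V ⊕ V) K) ∈ I)
    (m m' : V ⊕ V →₀ ℕ)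
    (h : Finsupp.linearCombination ℕ (segreExp c) m =
      Finsupp.linearCombination ℕ (segreExp c) m') :
    (monomial m 1 - monomial m' 1 : MvPolynomial (V ⊕ V) K) ∈ I := by
  induction hd : m'.degree generalizing m m' with
  | zero =>
    obtain rfl := (Finsupp.degree_eq_zero_iff m').mp hd
    obtain rfl : m = 0 := by
      by_contra hm
      obtain ⟨v, hv⟩ := DFunLike.ne_iff.mp hm
      obtain ⟨r, rfl⟩ := exists_eq_single_add hv
      rw [map_add, map_zero, add_eq_zero, Finsupp.linearCombination_single, one_smul] at h
      rcases v with j | j <;> simpa [segreExp] using DFunLike.congr_fun h.1 (Sum.inl j)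
    simp
  | succ d ih =>
    obtain ⟨v, hv⟩ : ∃ v, m' v ≠ 0 := by
      by_contra! hm
      obtain rfl : m' = 0 := Finsupp.ext hm
      simp at hd
    obtain ⟨r', rfl⟩ := exists_eq_single_add hv
    obtain ⟨r, hr, hmem⟩ := exists_single_add_of_segreExp c I hI v m r' h
    have := I.add_mem hmem (I.mul_mem_left (X v) (ih r r' hr (by
      rw [map_add, Finsupp.degree_single] at hd; omega)))
    rw [monomial_single_add_one]
    convert this using 1
    ring

end Segre

section Kill

variable {V K : Type*} [Field K]

open Classical in
/-- The algebra endomorphism setting `x_i` and `y_i` to zero for `i ∈ T`. -/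
def killVertices (K : Type*) [Field K] (T : Set V) :
    MvPolynomial (V ⊕ V) K →ₐ[K] MvPolynomial (V ⊕ V) K :=
  aeval fun v => if Sum.elim id id v ∈ T then 0 else X v

lemma sub_killVertices_mem (T : Set V) (I : Ideal (MvPolynomial (V ⊕ V) K))
    (hI : ∀ v : V ⊕ V, Sum.elim id id v ∈ T → X v ∈ I) (f : MvPolynomial (V ⊕ V) K) :
    f - killVertices K T f ∈ I := by
  have : Ideal.Quotient.mkₐ K I = (Ideal.Quotient.mkₐ K I).comp (killVertices K T) := by
    refine algHom_ext fun v => ?_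
    by_cases hv : Sum.elim id id v ∈ T
    · simpa [killVertices, hv] using Ideal.Quotient.eq_zero_iff_mem.mpr (hI v hv)
    · simp [killVertices, hv]
  exact Ideal.Quotient.eq.mp (DFunLike.congr_fun this f)

end Kill

open Classical in
/-- The connected component of a vertex outside `T`, and `none` for vertices in `T`. -/
def compOutside {V : Type*} (G : SimpleGraph V) (T : Set V) (i : V) :
    Option (G.induce Tᶜ).ConnectedComponent :=
  if h : i ∈ Tᶜ then some ((G.induce Tᶜ).connectedComponentMk ⟨i, h⟩) else none

lemma X_mem_PTIdeal (K : Type*) [Field K] {n : ℕ} (G : SimpleGraph (Fin n)) (T : Set (Fin n))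
    (v : Fin n ⊕ Fin n) (hv : Sum.elim id id v ∈ T) : X v ∈ PTIdeal K G T := by
  rcases v with i | i
  · exact Ideal.subset_span (Or.inl (Or.inl ⟨i, hv, rfl⟩))
  · exact Ideal.subset_span (Or.inl (Or.inr ⟨i, hv, rfl⟩))

lemma minor_mem_PTIdeal (K : Type*) [Field K] {n : ℕ} (G : SimpleGraph (Fin n))
    (T : Set (Fin n)) (i j : Fin n) (h : compOutside G T i = compOutside G T j) :
    X (Sum.inl i) * X (Sum.inr j) - X (Sum.inl j) * X (Sum.inr i) ∈ PTIdeal K G T := by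
  by_cases hij : i = j
  · subst hij
    simp
  by_cases hi : i ∈ T
  · exact sub_mem (Ideal.mul_mem_right _ _ (X_mem_PTIdeal K G T (Sum.inl i) hi))
      (Ideal.mul_mem_left _ _ (X_mem_PTIdeal K G T (Sum.inr i) hi))
  by_cases hj : j ∈ T
  · exact sub_mem (Ideal.mul_mem_left _ _ (X_mem_PTIdeal K G T (Sum.inr j) hj))
      (Ideal.mul_mem_right _ _ (X_mem_PTIdeal K G T (Sum.inl j) hj))
  refine Ideal.subset_span (Or.inr ⟨i, j, hi, hj, hij, ?_, rfl⟩)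
  simpa [compOutside, hi, hj] using h

/-- `P_T(G)` is the kernel of the parametrization `x_i ↦ t_i a_{c i}`, `y_i ↦ t_i b_{c i}` for
`i ∉ T`, and `x_i, y_i ↦ 0` for `i ∈ T`. -/
lemma PTIdeal_eq_ker (K : Type*) [Field K] {n : ℕ} (G : SimpleGraph (Fin n))
    (T : Set (Fin n)) : PTIdeal K G T =
      RingHom.ker ((toricHom K (segreExp (compOutside G T))).comp (killVertices K T)) := by
  apply le_antisymm
  · refine Ideal.span_le.mpr ?_
    rintro f ((⟨i, hi, rfl⟩ | ⟨i, hi, rfl⟩) | ⟨i, j, hi, hj, -, hr, rfl⟩)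
    · simp [RingHom.mem_ker, killVertices, hi]
    · simp [RingHom.mem_ker, killVertices, hi]
    · have hc : compOutside G T i = compOutside G T j := by
        rw [compOutside, compOutside, dif_pos hi, dif_pos hj]
        exact congrArg some (SimpleGraph.ConnectedComponent.eq.mpr hr)
      rw [Set.mem_compl_iff] at hi hj
      simp only [SetLike.mem_coe, RingHom.mem_ker, AlgHom.comp_apply, map_sub, map_mul,
        killVertices, toricHom, aeval_X, Sum.elim_inl, Sum.elim_inr, id, hi, hj, if_false,
        monomial_mul, segreExp, hc]
      rw [sub_eq_zero]
      congr 2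
      abel
  · intro f hf
    have hk : killVertices K T f ∈ PTIdeal K G T :=
      ker_toricHom_le _ _ (monomial_sub_mem_of_segreExp _ _ (minor_mem_PTIdeal K G T)) hf
    simpa using add_mem (sub_killVertices_mem T _ (X_mem_PTIdeal K G T) f) hk

/-- For every `T ⊆ [n]`, the ideal `P_T(G)` is a prime ideal of `S`. -/
theorem PTIdeal_isPrime (K : Type*) [Field K] (n : ℕ) (G : SimpleGraph (Fin n))
    (T : Set (Fin n)) : (PTIdeal K G T).IsPrime := by
  rw [PTIdeal_eq_ker]
  exact RingHom.ker_isPrime _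

end
end

section
/- For every T ⊆ [n], the height of P_T(G) equals n + |T| − c(T), where c(T) is the number of connected components of the induced subgraph of G on [n]∖T. -/
open MvPolynomial

noncomputable section

/-- A prime of `R[X]` containing `aX - b` with `a ∉ P` is strictly higher than its contraction. -/
theorem Polynomial.height_comap_C_add_one_le {R : Type*} [CommRing R] [IsNoetherianRing R]
    (P : Ideal (Polynomial R)) [P.IsPrime] {a b : R} (ha : Polynomial.C a ∉ P)
    (hab : Polynomial.C a * Polynomial.X - Polynomial.C b ∈ P) :
    (P.comap Polynomial.C).height + 1 ≤ P.height := by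
  set p := P.comap Polynomial.C with hp
  have hpprime : p.IsPrime := Ideal.comap_isPrime _ _
  have hmap : (p.map (Polynomial.C : R →+* Polynomial R)).IsPrime :=
    Ideal.isPrime_map_C_of_isPrime
  have hover : (p.map (Polynomial.C : R →+* Polynomial R)).LiesOver p := by
    refine ⟨le_antisymm Ideal.le_comap_map fun x hx => ?_⟩
    exact Ideal.comap_mono (f := Polynomial.C) (Ideal.map_comap_le : p.map Polynomial.C ≤ P) hx
  have hle : p.height ≤ (p.map (Polynomial.C : R →+* Polynomial R)).height := by
    rw [Ideal.height_eq_height_add_of_liesOver_of_hasGoingDown p (p.map Polynomial.C)]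
    exact le_self_add
  have hlt : p.map (Polynomial.C : R →+* Polynomial R) < P := by
    refine lt_of_le_of_ne Ideal.map_comap_le fun h => ha ?_
    rw [← h, Ideal.mem_map_C_iff] at hab
    have := hab 1
    simpa [hp] using this
  exact (add_le_add_left hle 1).trans (Ideal.height_add_one_le_of_lt_of_isPrime hlt)

/-- If the images of all variables in a field are fractions of elements of the base ring, then the
kernel of the evaluation has height at least the number of variables. -/
theorem MvPolynomial.card_le_height_ker_aeval {R F B : Type*} [CommRing R] [IsNoetherianRing R]
    [Field F] [Algebra R F] [Finite B] (v : B → F)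
    (hv : ∀ b, ∃ g h : R, algebraMap R F g ≠ 0 ∧ algebraMap R F g * v b = algebraMap R F h) :
    (Nat.card B : ℕ∞) ≤ (RingHom.ker (aeval v : MvPolynomial B R →ₐ[R] F)).height := by
  induction B using Finite.induction_empty_option with
  | of_equiv e ih =>
    have := ih (v ∘ e) fun b => hv (e b)
    rw [Nat.card_congr e] at this
    refine this.trans_eq ?_
    rw [← (renameEquiv R e).toRingEquiv.height_comap]
    congr 1
    ext f
    simp [RingHom.mem_ker, aeval_rename]
  | h_empty => simp
  | @h_option B _ ih =>
    obtain ⟨g, h, hg, hgh⟩ := hv none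
    have key := ih (v ∘ some) fun b => hv (some b)
    let E := (optionEquivLeft R B).toRingEquiv
    rw [← E.symm.height_comap]
    set P := (RingHom.ker (aeval v : MvPolynomial (Option B) R →ₐ[R] F)).comap E.symm with hP
    have hmem : ∀ q, q ∈ P ↔ aeval v (E.symm q) = 0 := fun q => Iff.rfl
    have : (RingHom.ker (aeval v : MvPolynomial (Option B) R →ₐ[R] F)).IsPrime :=
      RingHom.ker_isPrime _
    have hPp : P.IsPrime := Ideal.comap_isPrime _ _
    have hC : ∀ f : MvPolynomial B R, E.symm (Polynomial.C f) = rename some f := fun f => by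
      induction f using MvPolynomial.induction_on with
      | C r => simp [E]
      | add p q hp hq => simp only [map_add, hp, hq]
      | mul_X p i hp => simp only [map_mul, hp]; simp [E]
    have hcomap : P.comap Polynomial.C =
        RingHom.ker (aeval (v ∘ some) : MvPolynomial B R →ₐ[R] F) := by
      ext f
      rw [Ideal.mem_comap, hmem, hC, aeval_rename, RingHom.mem_ker]
    have := Polynomial.height_comap_C_add_one_le P (a := C g) (b := C h) ?_ ?_
    · rw [hcomap] at this
      rw [Nat.card_eq_fintype_card, Fintype.card_option]
      push_cast
      rw [← Nat.card_eq_fintype_card]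
      exact (add_le_add_left key 1).trans this
    · simpa [hmem, hC] using hg
    · have : E.symm Polynomial.X = X none := by simp [E]
      simp [hmem, hC, this, hgh]

/-- If the values of the variables in `B` are fractions of polynomials in the values of the other
variables, then the kernel of the evaluation has height at least `|B|`. -/
theorem MvPolynomial.ncard_le_height_ker_aeval {K F σ : Type*} [Field K] [Field F] [Algebra K F]
    [Finite σ] (v : σ → F) (B : Set σ)
    (hv : ∀ b ∈ B, ∃ g ∈ Algebra.adjoin K (v '' Bᶜ), ∃ h ∈ Algebra.adjoin K (v '' Bᶜ),
      g ≠ 0 ∧ g * v b = h) :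
    (B.ncard : ℕ∞) ≤ (RingHom.ker (aeval v : MvPolynomial σ K →ₐ[K] F)).height := by
  classical
  let w : ↥Bᶜ → F := fun a => v a
  let _ : Algebra (MvPolynomial ↥Bᶜ K) F :=
    (aeval w : MvPolynomial ↥Bᶜ K →ₐ[K] F).toRingHom.toAlgebra
  have halg : ∀ f, algebraMap (MvPolynomial ↥Bᶜ K) F f = aeval w f := fun _ => rfl
  have hadj : ∀ g ∈ Algebra.adjoin K (v '' Bᶜ), ∃ f : MvPolynomial ↥Bᶜ K, aeval w f = g := by
    intro g hg
    have : v '' Bᶜ = Set.range w := by ext; simp [w]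
    rwa [this, Algebra.adjoin_range_eq_range_aeval] at hg
  have key := MvPolynomial.card_le_height_ker_aeval (R := MvPolynomial ↥Bᶜ K)
      (fun b : B => v b) <| by
    rintro ⟨b, hb⟩
    obtain ⟨g, hg, h, hh, h0, hgh⟩ := hv b hb
    obtain ⟨g, rfl⟩ := hadj g hg
    obtain ⟨h, rfl⟩ := hadj h hh
    exact ⟨g, h, h0, hgh⟩
  rw [Nat.card_coe_set_eq] at key
  refine key.trans_eq ?_
  let E := (sumAlgEquiv K ↥B ↥Bᶜ).symm.trans (renameEquiv K (Equiv.Set.sumCompl B))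
  rw [← E.toRingEquiv.height_comap]
  congr 1
  have : ((aeval v : MvPolynomial σ K →ₐ[K] F).toRingHom.comp (E : _ →+* MvPolynomial σ K)) =
      (aeval (fun b : B => v b) : MvPolynomial ↥B (MvPolynomial ↥Bᶜ K) →ₐ[_] F).toRingHom := by
    ext x
    · simp [E, halg, w]
    · simp [E, halg, w]
    · simp [E]
  ext f
  exact (Eq.congr_left (congrArg (fun φ : _ →+* F => φ f) this)).symm

theorem PTIdeal_le_iff {K : Type*} [Field K] {n : ℕ} {G : SimpleGraph (Fin n)} {T : Set (Fin n)}
    {P : Ideal (MvPolynomial (Fin n ⊕ Fin n) K)} :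
    PTIdeal K G T ≤ P ↔ (∀ i ∈ T, X (Sum.inl i) ∈ P ∧ X (Sum.inr i) ∈ P) ∧
      ∀ i j : ↥Tᶜ, (G.induce Tᶜ).connectedComponentMk i = (G.induce Tᶜ).connectedComponentMk j →
        X (Sum.inl i.1) * X (Sum.inr j.1) - X (Sum.inl j.1) * X (Sum.inr i.1) ∈ P := by
  rw [PTIdeal, Ideal.span_le]
  constructor
  · intro h
    refine ⟨fun i hi => ⟨h (Or.inl (Or.inl ⟨i, hi, rfl⟩)), h (Or.inl (Or.inr ⟨i, hi, rfl⟩))⟩,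
      fun i j hij => ?_⟩
    by_cases hne : i = j
    · simp [hne]
    · exact h (Or.inr ⟨i, j, i.2, j.2, fun h => hne (Subtype.ext h),
        SimpleGraph.ConnectedComponent.exact hij, rfl⟩)
  · rintro ⟨hT, hC⟩ f ((⟨i, hi, rfl⟩ | ⟨i, hi, rfl⟩) | ⟨i, j, hi, hj, -, hij, rfl⟩)
    · exact (hT i hi).1
    · exact (hT i hi).2
    · exact hC ⟨i, hi⟩ ⟨j, hj⟩ (SimpleGraph.ConnectedComponent.sound hij)

/-- The index type of the `n + |T| - c(T)` variables (or equations) attached to a choice of one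
representative in each component: two for each vertex of `T`, and one for each vertex outside `T`
that is not a representative. -/
abbrev CodimIndex {n : ℕ} (T : Set (Fin n)) {C : Type*} (rep : C → ↥Tᶜ) : Type :=
  (↥T ⊕ ↥T) ⊕ ↥(Set.range rep)ᶜ

theorem card_codimIndex {n : ℕ} (T : Set (Fin n)) {C : Type*} {rep : C → ↥Tᶜ}
    (hrep : Function.Injective rep) :
    Nat.card (CodimIndex T rep) = n + T.ncard - Nat.card C := by
  have h1 : (Set.range rep).ncard = Nat.card C := by
    rw [← Nat.card_coe_set_eq, Nat.card_range_of_injective hrep]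
  have h2 := Set.ncard_add_ncard_compl (Set.range rep)
  have h3 := Set.ncard_add_ncard_compl T
  simp only [Nat.card_sum, Nat.card_coe_set_eq, Nat.card_fin] at *
  lia

section UpperBound

variable (K : Type*) [Field K] {n : ℕ} (G : SimpleGraph (Fin n)) (T : Set (Fin n))

open Classical in
/-- The parametrization `x_i ↦ x_i`, `y_i ↦ x_i z_c` (for `i ∉ T` in the component `c`),
`x_i, y_i ↦ 0` (for `i ∈ T`). -/
def slopeParam :
    Fin n ⊕ Fin n → MvPolynomial (↥Tᶜ ⊕ (G.induce Tᶜ).ConnectedComponent) K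
  | Sum.inl i => if h : i ∈ Tᶜ then X (Sum.inl ⟨i, h⟩) else 0
  | Sum.inr i => if h : i ∈ Tᶜ then
      X (Sum.inl ⟨i, h⟩) * X (Sum.inr ((G.induce Tᶜ).connectedComponentMk ⟨i, h⟩)) else 0

variable {T}

theorem slopeParam_inl (i : ↥Tᶜ) : slopeParam K G T (Sum.inl i.1) = X (Sum.inl i) :=
  dif_pos i.2

theorem slopeParam_inr (i : ↥Tᶜ) : slopeParam K G T (Sum.inr i.1) =
    X (Sum.inl i) * X (Sum.inr ((G.induce Tᶜ).connectedComponentMk i)) :=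
  dif_pos i.2

theorem slopeParam_inl_of_mem {i : Fin n} (hi : i ∈ T) : slopeParam K G T (Sum.inl i) = 0 :=
  dif_neg (not_not_intro hi)

theorem slopeParam_inr_of_mem {i : Fin n} (hi : i ∈ T) : slopeParam K G T (Sum.inr i) = 0 :=
  dif_neg (not_not_intro hi)

variable (T)

theorem PTIdeal_le_ker_slopeParam :
    PTIdeal K G T ≤ RingHom.ker (aeval (R := K) (slopeParam K G T)) := by
  rw [PTIdeal_le_iff]
  refine ⟨fun i hi => ?_, fun i j hij => ?_⟩
  · simp [RingHom.mem_ker, slopeParam_inl_of_mem, slopeParam_inr_of_mem, hi]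
  · simp only [RingHom.mem_ker, map_sub, map_mul, aeval_X, slopeParam_inl, slopeParam_inr, hij]
    ring

variable {G T}

/-- Elements of `P_T(G)` whose number is `n + |T| - c(T)`. -/
def codimEquation (rep : (G.induce Tᶜ).ConnectedComponent → ↥Tᶜ) :
    CodimIndex T rep → MvPolynomial (Fin n ⊕ Fin n) K
  | Sum.inl (Sum.inl i) => X (Sum.inl i.1)
  | Sum.inl (Sum.inr i) => X (Sum.inr i.1)
  | Sum.inr i =>
    let r := rep ((G.induce Tᶜ).connectedComponentMk i.1)
    X (Sum.inl i.1.1) * X (Sum.inr r.1) - X (Sum.inl r.1) * X (Sum.inr i.1.1)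

theorem ker_slopeParam_mem_minimalPrimes (rep : (G.induce Tᶜ).ConnectedComponent → ↥Tᶜ)
    (hrep : ∀ c, (G.induce Tᶜ).connectedComponentMk (rep c) = c) :
    RingHom.ker (aeval (R := K) (slopeParam K G T)) ∈
      (Ideal.span (Set.range (codimEquation K rep))).minimalPrimes := by
  have hker := PTIdeal_le_iff.1 (PTIdeal_le_ker_slopeParam K G T)
  refine ⟨⟨RingHom.ker_isPrime _, ?_⟩, ?_⟩
  · rw [Ideal.span_le]
    rintro _ ⟨(i | i) | i, rfl⟩
    · exact (hker.1 i i.2).1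
    · exact (hker.1 i i.2).2
    · exact hker.2 _ _ (hrep _).symm
  · rintro Q ⟨hQ, hle⟩ hQker
    rw [Ideal.span_le, Set.range_subset_iff] at hle
    let F := FractionRing (MvPolynomial (Fin n ⊕ Fin n) K ⧸ Q)
    let v : MvPolynomial (Fin n ⊕ Fin n) K →ₐ[K] F :=
      (IsScalarTower.toAlgHom K (MvPolynomial (Fin n ⊕ Fin n) K ⧸ Q) F).comp
        (Ideal.Quotient.mkₐ K Q)
    have hv : ∀ f, v f = 0 ↔ f ∈ Q := fun f => by simp [v, F, Ideal.Quotient.eq_zero_iff_mem]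
    have hx : ∀ i : ↥Tᶜ, v (X (Sum.inl i.1)) ≠ 0 := fun i h => by
      have := hQker ((hv _).1 h)
      simp [RingHom.mem_ker, slopeParam_inl] at this
    let ψ : MvPolynomial (↥Tᶜ ⊕ (G.induce Tᶜ).ConnectedComponent) K →ₐ[K] F :=
      aeval (Sum.elim (fun i => v (X (Sum.inl i.1)))
        fun c => v (X (Sum.inr (rep c).1)) / v (X (Sum.inl (rep c).1)))
    have hψ : ψ.comp (aeval (slopeParam K G T)) = v := by
      ext s
      rcases s with i | i
      · by_cases hi : i ∈ T
        · have := (hv _).2 (hle (Sum.inl (Sum.inl ⟨i, hi⟩)))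
          simpa [slopeParam_inl_of_mem, hi, eq_comm, codimEquation] using this
        · simpa [ψ] using congrArg ψ (slopeParam_inl K G ⟨i, hi⟩)
      · by_cases hi : i ∈ T
        · have := (hv _).2 (hle (Sum.inl (Sum.inr ⟨i, hi⟩)))
          simpa [slopeParam_inr_of_mem, hi, eq_comm, codimEquation] using this
        · have h1 := congrArg ψ (slopeParam_inr K G ⟨i, hi⟩)
          set r := rep ((G.induce Tᶜ).connectedComponentMk ⟨i, hi⟩) with hr
          have h2 : v (X (Sum.inl i)) * v (X (Sum.inr r.1)) =
              v (X (Sum.inl r.1)) * v (X (Sum.inr i)) := by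
            by_cases hir : (⟨i, hi⟩ : ↥Tᶜ) ∈ Set.range rep
            · obtain ⟨c, hc⟩ := hir
              have : r = ⟨i, hi⟩ := by rw [hr, ← hc, hrep]
              simp [this]
            · have := (hv _).2 (hle (Sum.inr ⟨⟨i, hi⟩, hir⟩))
              simpa [codimEquation, sub_eq_zero] using this
          simp only [ψ, map_mul, aeval_X, Sum.elim_inl, Sum.elim_inr, ← hr] at h1
          simp only [AlgHom.comp_apply, aeval_X]
          rw [h1, mul_div_assoc', h2, mul_div_cancel_left₀ _ (hx r)]
    intro f hf
    rw [← hv, ← hψ, AlgHom.comp_apply, (RingHom.mem_ker).1 hf, map_zero]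

theorem height_ker_slopeParam_le :
    (RingHom.ker (aeval (R := K) (slopeParam K G T))).height ≤
      ((n + T.ncard - cNum G Tᶜ : ℕ) : ℕ∞) := by
  have hex : ∀ c, ∃ r, (G.induce Tᶜ).connectedComponentMk r = c := fun c => c.exists_rep
  choose rep hrep using hex
  have hinj : Function.Injective rep := fun c d h => by rw [← hrep c, ← hrep d, h]
  refine (Ideal.height_le_card_of_mem_minimalPrimes_span (Set.finite_range _)
    (ker_slopeParam_mem_minimalPrimes K rep hrep)).trans ?_
  rw [cNum, ← card_codimIndex T hinj, ← Nat.card_coe_set_eq]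
  exact_mod_cast Finite.card_range_le _

end UpperBound

section LowerBound

variable {n : ℕ} {G : SimpleGraph (Fin n)} {T : Set (Fin n)}

/-- Given a choice of representatives, the variables `x_i, y_i` for `i ∈ T`, together with, for each
`i ∉ T` that is not a representative, `y_i` if the component of `i` satisfies `p`, and `x_i`
otherwise. -/
def codimVariable (p : (G.induce Tᶜ).ConnectedComponent → Prop) [DecidablePred p]
    (rep : (G.induce Tᶜ).ConnectedComponent → ↥Tᶜ) : CodimIndex T rep → Fin n ⊕ Fin n
  | Sum.inl (Sum.inl i) => Sum.inl i.1
  | Sum.inl (Sum.inr i) => Sum.inr i.1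
  | Sum.inr i => if p ((G.induce Tᶜ).connectedComponentMk i.1) then Sum.inr i.1.1
      else Sum.inl i.1.1

variable (p : (G.induce Tᶜ).ConnectedComponent → Prop) [DecidablePred p]
  (rep : (G.induce Tᶜ).ConnectedComponent → ↥Tᶜ)

theorem inl_mem_range_codimVariable (i : ↥Tᶜ) :
    Sum.inl i.1 ∈ Set.range (codimVariable p rep) ↔
      i ∉ Set.range rep ∧ ¬ p ((G.induce Tᶜ).connectedComponentMk i) := by
  constructor
  · rintro ⟨(j | j) | j, hj⟩
    · exact absurd (Sum.inl.inj hj ▸ j.2) i.2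
    · cases hj
    · simp only [codimVariable] at hj
      split_ifs at hj with h
      obtain rfl : j.1 = i := Subtype.ext (Sum.inl.inj hj)
      exact ⟨j.2, h⟩
  · rintro ⟨h, hp⟩
    exact ⟨Sum.inr ⟨i, h⟩, if_neg hp⟩

theorem inr_mem_range_codimVariable (i : ↥Tᶜ) :
    Sum.inr i.1 ∈ Set.range (codimVariable p rep) ↔
      i ∉ Set.range rep ∧ p ((G.induce Tᶜ).connectedComponentMk i) := by
  constructor
  · rintro ⟨(j | j) | j, hj⟩
    · cases hj
    · exact absurd (Sum.inr.inj hj ▸ j.2) i.2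
    · simp only [codimVariable] at hj
      split_ifs at hj with h
      obtain rfl : j.1 = i := Subtype.ext (Sum.inr.inj hj)
      exact ⟨j.2, h⟩
  · rintro ⟨h, hp⟩
    exact ⟨Sum.inr ⟨i, h⟩, if_pos hp⟩

theorem codimVariable_injective : Function.Injective (codimVariable p rep) := by
  rintro ((i | i) | i) ((j | j) | j) h <;> simp only [codimVariable] at h <;>
    (try split_ifs at h) <;> simp_all [Subtype.ext_iff]
  all_goals first | exact i.1.2 (h ▸ j.2) | exact j.1.2 (h ▸ i.2)

variable {K : Type*} [Field K]

theorem le_height_of_PTIdeal_le (P : Ideal (MvPolynomial (Fin n ⊕ Fin n) K)) [P.IsPrime]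
    (hP : PTIdeal K G T ≤ P) : ((n + T.ncard - cNum G Tᶜ : ℕ) : ℕ∞) ≤ P.height := by
  classical
  rw [PTIdeal_le_iff] at hP
  obtain ⟨hT, hminor⟩ := hP
  let F := FractionRing (MvPolynomial (Fin n ⊕ Fin n) K ⧸ P)
  let φ : MvPolynomial (Fin n ⊕ Fin n) K →ₐ[K] F :=
    (IsScalarTower.toAlgHom K (MvPolynomial (Fin n ⊕ Fin n) K ⧸ P) F).comp
      (Ideal.Quotient.mkₐ K P)
  have hφ : ∀ f, φ f = 0 ↔ f ∈ P := fun f => by simp [φ, F, Ideal.Quotient.eq_zero_iff_mem]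
  let v : Fin n ⊕ Fin n → F := fun s => φ (X s)
  have hker : RingHom.ker (aeval v : MvPolynomial (Fin n ⊕ Fin n) K →ₐ[K] F) = P := by
    ext f
    rw [← hφ, aeval_unique φ]
    rfl
  have hmin : ∀ i j : ↥Tᶜ,
      (G.induce Tᶜ).connectedComponentMk i = (G.induce Tᶜ).connectedComponentMk j →
      v (Sum.inl i.1) * v (Sum.inr j.1) = v (Sum.inl j.1) * v (Sum.inr i.1) := fun i j hij => by
    simpa [v, sub_eq_zero] using (hφ _).2 (hminor i j hij)
  have hex : ∀ c : (G.induce Tᶜ).ConnectedComponent, ∃ r : ↥Tᶜ,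
      (G.induce Tᶜ).connectedComponentMk r = c ∧
      (v (Sum.inl r.1) = 0 → v (Sum.inr r.1) = 0 →
        ∀ j : ↥Tᶜ, (G.induce Tᶜ).connectedComponentMk j = c → v (Sum.inl j.1) = 0) := by
    intro c
    by_cases h : ∀ j : ↥Tᶜ, (G.induce Tᶜ).connectedComponentMk j = c → v (Sum.inl j.1) = 0
    · obtain ⟨r, hr⟩ := c.exists_rep
      exact ⟨r, hr, fun _ _ => h⟩
    · push Not at h
      obtain ⟨r, hr, h0⟩ := h
      exact ⟨r, hr, fun h => absurd h h0⟩
  choose rep hrep hzero using hex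
  have hinj : Function.Injective rep := fun c d h => by rw [← hrep c, ← hrep d, h]
  let p : (G.induce Tᶜ).ConnectedComponent → Prop := fun c => v (Sum.inl (rep c).1) ≠ 0
  set B := Set.range (codimVariable p rep) with hB
  have hcard : B.ncard = n + T.ncard - cNum G Tᶜ := by
    rw [cNum, ← card_codimIndex T hinj, ← Nat.card_coe_set_eq,
      Nat.card_range_of_injective (codimVariable_injective p rep)]
  rw [← hcard, ← hker]
  have hadj : ∀ s ∉ B, v s ∈ Algebra.adjoin K (v '' Bᶜ) := fun s hs =>
    Algebra.subset_adjoin ⟨s, hs, rfl⟩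
  refine MvPolynomial.ncard_le_height_ker_aeval v B ?_
  rintro _ ⟨(i | i) | i, rfl⟩
  · exact ⟨1, one_mem _, 0, zero_mem _, one_ne_zero, by
      simpa [codimVariable, v] using (hφ _).2 (hT i i.2).1⟩
  · exact ⟨1, one_mem _, 0, zero_mem _, one_ne_zero, by
      simpa [codimVariable, v] using (hφ _).2 (hT i i.2).2⟩
  · set c := (G.induce Tᶜ).connectedComponentMk i.1 with hc
    have hxr : v (Sum.inl (rep c).1) ∈ Algebra.adjoin K (v '' Bᶜ) :=
      hadj _ fun h => ((inl_mem_range_codimVariable p rep _).1 h).1 ⟨c, rfl⟩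
    have hyr : v (Sum.inr (rep c).1) ∈ Algebra.adjoin K (v '' Bᶜ) :=
      hadj _ fun h => ((inr_mem_range_codimVariable p rep _).1 h).1 ⟨c, rfl⟩
    have hrel := hmin i.1 (rep c) (hrep c).symm
    by_cases hpc : p c
    · have hi : v (Sum.inl i.1.1) ∈ Algebra.adjoin K (v '' Bᶜ) :=
        hadj _ fun h => ((inl_mem_range_codimVariable p rep _).1 h).2 hpc
      refine ⟨_, hxr, _, mul_mem hi hyr, hpc, ?_⟩
      simp only [codimVariable, ← hc, if_pos hpc, hrel]
    · simp only [codimVariable, ← hc, if_neg hpc]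
      by_cases hy : v (Sum.inr (rep c).1) = 0
      · exact ⟨1, one_mem _, 0, zero_mem _, one_ne_zero, by
          simpa using hzero c (not_not.1 hpc) hy i.1 rfl⟩
      · have hi : v (Sum.inr i.1.1) ∈ Algebra.adjoin K (v '' Bᶜ) :=
          hadj _ fun h => hpc ((inr_mem_range_codimVariable p rep _).1 h).2
        exact ⟨_, hyr, _, mul_mem hxr hi, hy, by rw [mul_comm, hrel]⟩

end LowerBound

/-- For every `T ⊆ [n]`, the height of `P_T(G)` equals
`n + |T| - c(T)`, where `c(T)` is the number of connected components of the subgraph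
of `G` induced on `[n] ∖ T`. -/
theorem htI_PTIdeal (K : Type*) [Field K] (n : ℕ) (G : SimpleGraph (Fin n))
    (T : Set (Fin n)) :
    htI (PTIdeal K G T) = ((n + T.ncard - cNum G Tᶜ : ℕ) : ℕ∞) := by
  refine le_antisymm ?_ (le_iInf₂ fun P hP => ?_)
  · refine (iInf₂_le ⟨_, RingHom.ker_isPrime (aeval (R := K) (slopeParam K G T))⟩
      (PTIdeal_le_ker_slopeParam K G T)).trans ?_
    rw [← PrimeSpectrum.height_eq_orderHeight]
    exact height_ker_slopeParam_le K
  · rw [← PrimeSpectrum.height_eq_orderHeight]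
    exact le_height_of_PTIdeal_le P.asIdeal hP

end
end
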